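/- arXiv:2412.00865 — 2 statements merged into one kernel-verified Lean document; each statement's English description precedes it below -/
import Mathlib

section
/- Assume γ ∈ ((d+1)/2,(d+4)/2). There exist η₀ > 0 and C > 0 such that the following holds for every η ∈ (0,η₀] and every R > 0. Let N : ℝ^d → ℂ be a twice continuously differentiable function with ∫ |N|² dv < ∞, ∫ |∇(N/M)|² M² dv < ∞ and ∫ (1+|v₁|) |N|² dv ≤ K, satisfying pointwise the equation −ΔN + WN + iηv₁N = −bΦ on ℝ^d with b := ∫ (N − M)Φ dv. Set c_η := (∫ M²⟨v⟩^{−2} dv)^{−1} ∫ N M ⟨v⟩^{−2} dv. Then ∫_{\{|v₁| ≤ R\}} |N(v) − c_η M(v)|² ⟨v⟩^{−2} dv ≤ C(1+K²) η. -/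
open MeasureTheory Real

noncomputable section

/-- The Laplacian on `ℝ^d`, as the sum of the second partial derivatives. -/
def lap {d : ℕ} {E : Type*} [NormedAddCommGroup E] [NormedSpace ℝ E]
    (f : EuclideanSpace ℝ (Fin d) → E) (v : EuclideanSpace ℝ (Fin d)) : E :=
  ∑ i : Fin d, fderiv ℝ (fun w => fderiv ℝ f w (EuclideanSpace.single i (1 : ℝ))) v
    (EuclideanSpace.single i (1 : ℝ))

/-- The penalization function `Φ := (∫ M²⟨v⟩⁻²)⁻¹ M ⟨v⟩⁻²`. -/
def Phi {d : ℕ} (M : EuclideanSpace ℝ (Fin d) → ℝ) (v : EuclideanSpace ℝ (Fin d)) : ℝ :=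
  (∫ w, (M w) ^ 2 / (1 + ‖w‖ ^ 2))⁻¹ * (M v / (1 + ‖v‖ ^ 2))

/-!
Write `N = M h`. Since the potential `ΔM / M` makes `M` a zero mode, `Δ - ΔM / M` becomes the
divergence form operator `h ↦ M⁻¹ div (M² ∇h)`. Pairing the equation with `M` kills this operator,
and, as `∫ M Φ = 1`, leaves `b = O(η)`. Pairing with `N` and taking real parts kills the term
`i η v₁`, which is skew, and leaves `∫ M² |∇h|² ≤ |∫ N Φ| |b| = |1 + b| |b| = O(η)`.

The weight `M²` is comparable to `⟨v⟩^(-2γ)`, so the rest is a Hardy-Poincaré inequality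
`∫ M² ⟨v⟩⁻² |h - c|² ≤ P ∫ M² |∇h|²`, with `c` the mean of `h` for the weight on the left. By Jensen
it suffices to bound the double integral of `|h(v) - h(w)|²`. Integrate `∇h` along the segment from
`w` to `v`: the factor `|v - w|²` is absorbed by `⟨v⟩⁻² ⟨w⟩⁻²`, and the product of the two remaining
weights controls the weight at the intermediate point, with powers of `s` and `1 - s` that
compensate the Jacobian of `v ↦ s v + (1 - s) w`.
-/

section DivergenceTheorem

open Filter Topology

variable {E F : Type*} [NormedAddCommGroup E] [NormedSpace ℝ E] [FiniteDimensional ℝ E]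
  [NormedAddCommGroup F] [NormedSpace ℝ F]

variable (E) in
lemma exists_cutoff_seq :
    ∃ (χ : ℕ → E → ℝ) (C : ℝ), (∀ n, ContDiff ℝ 1 (χ n)) ∧ (∀ n, HasCompactSupport (χ n)) ∧
      (∀ n v, ‖χ n v‖ ≤ 1) ∧ (∀ n v, ‖fderiv ℝ (χ n) v‖ ≤ 1 / ((n : ℝ) + 1) * C) ∧
      ∀ v, Tendsto (fun n ↦ χ n v) atTop (𝓝 1) := by
  let f : ContDiffBump (0 : E) := ⟨1, 2, one_pos, one_lt_two⟩
  have hf : ContDiff ℝ 1 f := f.contDiff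
  obtain ⟨C, hC⟩ := (f.hasCompactSupport.fderiv (𝕜 := ℝ)).exists_bound_of_continuous
    (hf.continuous_fderiv one_ne_zero)
  have hpos (n : ℕ) : 0 < 1 / ((n : ℝ) + 1) := by positivity
  refine ⟨fun n v ↦ f ((1 / ((n : ℝ) + 1)) • v), C,
    fun n ↦ hf.comp (contDiff_id.const_smul _),
    fun n ↦ f.hasCompactSupport.comp_homeomorph (Homeomorph.smulOfNeZero _ (hpos n).ne'),
    fun n v ↦ ?_, fun n v ↦ ?_, fun v ↦ ?_⟩
  · rw [Real.norm_of_nonneg f.nonneg]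
    exact f.le_one
  · rw [fderiv_comp_smul, norm_smul, Real.norm_of_nonneg (hpos n).le]
    exact mul_le_mul_of_nonneg_left (hC _) (hpos n).le
  · have hscale : Tendsto (fun n : ℕ ↦ (1 / ((n : ℝ) + 1)) • v) atTop (𝓝 0) := by
      simpa only [zero_smul] using
        (tendsto_one_div_add_atTop_nhds_zero_nat (𝕜 := ℝ)).smul_const v
    have hf0 : f 0 = 1 := f.one_of_mem_closedBall (Metric.mem_closedBall_self f.rIn_pos.le)
    simpa only [Function.comp_def, hf0] using (f.continuous.tendsto 0).comp hscale

variable [MeasurableSpace E] [BorelSpace E] {μ : Measure E} [μ.IsAddHaarMeasure]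
  {ι : Type*} [Fintype ι] {e : ι → E} {J : ι → E → F}

lemma integral_smul_sum_fderiv_eq_neg {χ : E → ℝ} (hχ : ContDiff ℝ 1 χ)
    (hχc : HasCompactSupport χ) (hJ : ∀ i, ContDiff ℝ 1 (J i)) :
    ∫ v, χ v • ∑ i, fderiv ℝ (J i) v (e i) ∂μ =
      -∫ v, ∑ i, fderiv ℝ χ v (e i) • J i v ∂μ := by
  have hχ' (i : ι) : Continuous fun v ↦ fderiv ℝ χ v (e i) :=
    (hχ.continuous_fderiv one_ne_zero).clm_apply continuous_const
  have hJ' (i : ι) : Continuous fun v ↦ fderiv ℝ (J i) v (e i) :=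
    ((hJ i).continuous_fderiv one_ne_zero).clm_apply continuous_const
  have hint (i : ι) : Integrable (fun v ↦ χ v • fderiv ℝ (J i) v (e i)) μ :=
    (hχ.continuous.smul (hJ' i)).integrable_of_hasCompactSupport hχc.smul_right
  have hint' (i : ι) : Integrable (fun v ↦ fderiv ℝ χ v (e i) • J i v) μ :=
    ((hχ' i).smul (hJ i).continuous).integrable_of_hasCompactSupport
      (hχc.fderiv_apply (𝕜 := ℝ) _).smul_right
  simp_rw [Finset.smul_sum]
  rw [integral_finsetSum _ fun i _ ↦ hint i, integral_finsetSum _ fun i _ ↦ hint' i,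
    ← Finset.sum_neg_distrib]
  refine Finset.sum_congr rfl fun i _ ↦
    integral_smul_fderiv_eq_neg_fderiv_smul_of_integrable (hint' i) (hint i) ?_
      (fun v _ ↦ hχ.differentiable one_ne_zero v) (fun v _ ↦ (hJ i).differentiable one_ne_zero v)
  exact (hχ.continuous.smul (hJ i).continuous).integrable_of_hasCompactSupport hχc.smul_right

theorem integral_sum_fderiv_eq_zero (hJ : ∀ i, ContDiff ℝ 1 (J i))
    (hJi : ∀ i, Integrable (J i) μ)
    (hdiv : Integrable (fun v ↦ ∑ i, fderiv ℝ (J i) v (e i)) μ) :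
    ∫ v, ∑ i, fderiv ℝ (J i) v (e i) ∂μ = 0 := by
  obtain ⟨χ, C, hχ, hχc, hχ_le, hχ', hχ_lim⟩ := exists_cutoff_seq E
  have hlim : Tendsto (fun n ↦ ∫ v, χ n v • ∑ i, fderiv ℝ (J i) v (e i) ∂μ) atTop
      (𝓝 (∫ v, ∑ i, fderiv ℝ (J i) v (e i) ∂μ)) := by
    refine tendsto_integral_of_dominated_convergence _
      (fun n ↦ (hχ n).continuous.aestronglyMeasurable.smul hdiv.1) hdiv.norm
      (fun n ↦ .of_forall fun v ↦ ?_) (.of_forall fun v ↦ ?_)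
    · rw [norm_smul]
      exact mul_le_of_le_one_left (norm_nonneg _) (hχ_le n v)
    · simpa only [one_smul] using (hχ_lim v).smul_const (∑ i, fderiv ℝ (J i) v (e i))
  have hbound (n : ℕ) : ‖∫ v, χ n v • ∑ i, fderiv ℝ (J i) v (e i) ∂μ‖ ≤
      1 / ((n : ℝ) + 1) * C * ∫ v, ∑ i, ‖e i‖ * ‖J i v‖ ∂μ := by
    rw [integral_smul_sum_fderiv_eq_neg (hχ n) (hχc n) hJ, norm_neg, ← integral_const_mul]
    refine norm_integral_le_of_norm_le
      ((integrable_finsetSum _ fun i _ ↦ (hJi i).norm.const_mul _).const_mul _)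
      (.of_forall fun v ↦ ?_)
    rw [Finset.mul_sum]
    refine norm_sum_le_of_le _ fun i _ ↦ ?_
    rw [norm_smul, ← mul_assoc]
    gcongr
    exact (fderiv ℝ (χ n) v).le_of_opNorm_le (hχ' n v) (e i)
  refine tendsto_nhds_unique hlim (squeeze_zero_norm hbound ?_)
  simpa only [zero_mul] using
    ((tendsto_one_div_add_atTop_nhds_zero_nat (𝕜 := ℝ)).mul_const C).mul_const
      (∫ v, ∑ i, ‖e i‖ * ‖J i v‖ ∂μ)

end DivergenceTheorem

section HardyPoincare

open Set Module
open scoped ENNReal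

variable {α : Type*} [MeasurableSpace α]

lemma sq_lintegral_le_measure_univ_mul (μ : Measure α) {f : α → ℝ≥0∞} (hf : AEMeasurable f μ) :
    (∫⁻ x, f x ∂μ) ^ 2 ≤ μ univ * ∫⁻ x, f x ^ 2 ∂μ := by
  have holder := ENNReal.lintegral_mul_le_Lp_mul_Lq μ HolderConjugate.two_two
    (f := fun _ ↦ 1) (g := f) aemeasurable_const hf
  have sq_sqrt (a : ℝ≥0∞) : (a ^ (1 / 2 : ℝ)) ^ 2 = a := by
    rw [← ENNReal.rpow_natCast, ← ENNReal.rpow_mul]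
    norm_num
  have holder_sq := pow_le_pow_left' holder 2
  rw [mul_pow, sq_sqrt, sq_sqrt] at holder_sq
  simpa using holder_sq

lemma integrable_and_integral_le_of_lintegral_ofReal_le {μ : Measure α} {f g : α → ℝ}
    (hf : AEStronglyMeasurable f μ) (hf0 : 0 ≤ f) (hg : Integrable g μ) (hg0 : 0 ≤ g)
    {κ : ℝ≥0∞} (hκ : κ ≠ ∞)
    (hle : ∫⁻ x, ENNReal.ofReal (f x) ∂μ ≤ κ * ∫⁻ x, ENNReal.ofReal (g x) ∂μ) :
    Integrable f μ ∧ ∫ x, f x ∂μ ≤ κ.toReal * ∫ x, g x ∂μ := by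
  have hfin : κ * ∫⁻ x, ENNReal.ofReal (g x) ∂μ ≠ ∞ :=
    ENNReal.mul_ne_top hκ hg.lintegral_lt_top.ne
  refine ⟨(lintegral_ofReal_ne_top_iff_integrable hf (.of_forall hf0)).1
    (ne_top_of_le_ne_top hfin hle), ?_⟩
  rw [integral_eq_lintegral_of_nonneg_ae (.of_forall hf0) hf,
    integral_eq_lintegral_of_nonneg_ae (.of_forall hg0) hg.1, ← ENNReal.toReal_mul]
  exact ENNReal.toReal_mono hfin hle

lemma withDensity_univ_ne_zero {μ : Measure α} [NeZero μ] {f : α → ℝ≥0∞} (hf : AEMeasurable f μ)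
    (hf0 : ∀ x, f x ≠ 0) : μ.withDensity f univ ≠ 0 := by
  refine Measure.measure_univ_ne_zero.2 fun hzero ↦ ?_
  obtain ⟨x, hx⟩ := ((withDensity_eq_zero_iff hf).1 hzero).exists
  exact hf0 x hx

lemma ofReal_mul_norm_sq {G : Type*} [SeminormedAddGroup G] {x : ℝ} (hx : 0 ≤ x) (y : G) :
    ENNReal.ofReal (x * ‖y‖ ^ 2) = ENNReal.ofReal x * ‖y‖ₑ ^ 2 := by
  rw [ENNReal.ofReal_mul hx, ENNReal.ofReal_pow (norm_nonneg y), ofReal_norm]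

variable {F : Type*} [NormedAddCommGroup F] [NormedSpace ℝ F]

/-- The mean of `h` with respect to the measure with density `q` relative to `μ`. -/
def weightedMean (q : α → ℝ) (h : α → F) (μ : Measure α) : F :=
  (∫ x, q x ∂μ)⁻¹ • ∫ x, q x • h x ∂μ

lemma average_withDensity_ofReal {μ : Measure α} {q : α → ℝ} (hq : Measurable q) (hq0 : 0 ≤ q)
    (h : α → F) :
    ⨍ x, h x ∂μ.withDensity (fun x ↦ ENNReal.ofReal (q x)) = weightedMean q h μ := by
  rw [average_eq, integral_withDensity_eq_integral_toReal_smul hq.ennreal_ofReal (by simp)]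
  simp only [ENNReal.toReal_ofReal (hq0 _)]
  rw [measureReal_def, withDensity_apply _ .univ, setLIntegral_univ,
    ← integral_eq_lintegral_of_nonneg_ae (.of_forall hq0) hq.aestronglyMeasurable, weightedMean]

lemma measure_univ_mul_enorm_sub_average_sq_le [CompleteSpace F] (ν : Measure α)
    [IsFiniteMeasure ν] {h : α → F} (hh : Integrable h ν) (z : F) :
    ν univ * ‖z - ⨍ y, h y ∂ν‖ₑ ^ 2 ≤ ∫⁻ y, ‖z - h y‖ₑ ^ 2 ∂ν := by
  rcases eq_or_ne ν 0 with rfl | hν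
  · simp
  have havg : ν.real univ • (z - ⨍ y, h y ∂ν) = ∫ y, (z - h y) ∂ν := by
    rw [smul_sub, measure_smul_average, integral_sub (integrable_const z) hh, integral_const]
  have hmass : ν univ * ‖z - ⨍ y, h y ∂ν‖ₑ ≤ ∫⁻ y, ‖z - h y‖ₑ ∂ν := by
    calc ν univ * ‖z - ⨍ y, h y ∂ν‖ₑ = ‖∫ y, (z - h y) ∂ν‖ₑ := by
          rw [← havg, enorm_smul, Real.enorm_of_nonneg measureReal_nonneg, ofReal_measureReal]
      _ ≤ ∫⁻ y, ‖z - h y‖ₑ ∂ν := enorm_integral_le_lintegral_enorm _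
  refine (ENNReal.mul_le_mul_iff_right (Measure.measure_univ_ne_zero.2 hν)
    (measure_ne_top ν univ)).1 ?_
  calc ν univ * (ν univ * ‖z - ⨍ y, h y ∂ν‖ₑ ^ 2) = (ν univ * ‖z - ⨍ y, h y ∂ν‖ₑ) ^ 2 := by ring
    _ ≤ (∫⁻ y, ‖z - h y‖ₑ ∂ν) ^ 2 := by gcongr
    _ ≤ ν univ * ∫⁻ y, ‖z - h y‖ₑ ^ 2 ∂ν :=
        sq_lintegral_le_measure_univ_mul ν ((aestronglyMeasurable_const.sub hh.1).enorm)

variable {E : Type*} [NormedAddCommGroup E]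

/-- The weight `⟨v⟩^(-2γ)`, valued in `ℝ≥0∞` so that Tonelli's theorem applies to it without
integrability conditions. -/
def bracketWeight (γ : ℝ) (v : E) : ℝ≥0∞ :=
  ENNReal.ofReal ((1 + ‖v‖ ^ 2) ^ (-γ))

@[fun_prop]
lemma measurable_bracketWeight [MeasurableSpace E] [BorelSpace E] (γ : ℝ) :
    Measurable (bracketWeight γ : E → ℝ≥0∞) := by
  unfold bracketWeight
  fun_prop

lemma bracketWeight_ne_zero (γ : ℝ) (v : E) : bracketWeight γ v ≠ 0 :=
  (ENNReal.ofReal_pos.2 (by positivity)).ne'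

lemma bracketWeight_ne_top (γ : ℝ) (v : E) : bracketWeight γ v ≠ ∞ :=
  ENNReal.ofReal_ne_top

lemma bracketWeight_add (γ δ : ℝ) (v : E) :
    bracketWeight (γ + δ) v = bracketWeight γ v * bracketWeight δ v := by
  rw [bracketWeight, neg_add, rpow_add (by positivity), ENNReal.ofReal_mul (by positivity)]
  rfl

lemma enorm_sub_sq_mul_bracketWeight_one_le (v w : E) :
    ‖v - w‖ₑ ^ 2 * (bracketWeight 1 v * bracketWeight 1 w) ≤ 2 := by
  simp only [bracketWeight, rpow_neg_one]
  rw [← ofReal_norm, ← ENNReal.ofReal_pow (norm_nonneg _), ← ENNReal.ofReal_mul (by positivity),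
    ← ENNReal.ofReal_mul (by positivity), ← ENNReal.ofReal_ofNat]
  refine ENNReal.ofReal_le_ofReal ?_
  rw [← mul_inv, ← div_eq_mul_inv, div_le_iff₀ (by positivity)]
  have := pow_le_pow_left₀ (norm_nonneg _) (norm_sub_le v w) 2
  nlinarith [sq_nonneg (‖v‖ - ‖w‖), sq_nonneg (‖v‖ * ‖w‖)]

variable [NormedSpace ℝ E]

lemma add_rpow_le_two_rpow_mul {x y p : ℝ} (hx : 0 ≤ x) (hy : 0 ≤ y) (hp : 0 ≤ p) :
    (x + y) ^ p ≤ 2 ^ p * (x ^ p + y ^ p) := by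
  wlog hxy : x ≤ y generalizing x y
  · simpa only [add_comm] using this hy hx (le_of_not_ge hxy)
  calc (x + y) ^ p ≤ (2 * y) ^ p := by gcongr; linarith
    _ = 2 ^ p * y ^ p := mul_rpow zero_le_two hy
    _ ≤ 2 ^ p * (x ^ p + y ^ p) := by gcongr; exact le_add_of_nonneg_left (by positivity)

lemma one_add_norm_segment_sq_le (s : ℝ) (v w : E) :
    1 + ‖s • v + (1 - s) • w‖ ^ 2 ≤
      2 * (s ^ 2 * (1 + ‖v‖ ^ 2) + (1 - s) ^ 2 * (1 + ‖w‖ ^ 2)) := by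
  have htri : ‖s • v + (1 - s) • w‖ ≤ |s| * ‖v‖ + |1 - s| * ‖w‖ := by
    simpa only [norm_smul, norm_eq_abs] using norm_add_le (s • v) ((1 - s) • w)
  have hsq := pow_le_pow_left₀ (norm_nonneg _) htri 2
  nlinarith [sq_nonneg (|s| * ‖v‖ - |1 - s| * ‖w‖), sq_nonneg (2 * s - 1), sq_abs s,
    sq_abs (1 - s)]

/- Convexity would produce the weights `s` and `1 - s`; keeping `s ^ 2` and `(1 - s) ^ 2` instead
is what lets the Jacobian of `v ↦ s • v + (1 - s) • w` be absorbed, uniformly in `s`. -/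
lemma bracketWeight_mul_le {γ : ℝ} (hγ : 0 ≤ γ) (s : ℝ) (v w : E) :
    bracketWeight γ v * bracketWeight γ w ≤
      ENNReal.ofReal (4 ^ γ) * bracketWeight γ (s • v + (1 - s) • w) *
        (ENNReal.ofReal ((s ^ 2) ^ γ) * bracketWeight γ w +
          ENNReal.ofReal (((1 - s) ^ 2) ^ γ) * bracketWeight γ v) := by
  unfold bracketWeight
  rw [← ENNReal.ofReal_mul (by positivity), ← ENNReal.ofReal_mul (by positivity),
    ← ENNReal.ofReal_mul (by positivity), ← ENNReal.ofReal_mul (by positivity),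
    ← ENNReal.ofReal_add (by positivity) (by positivity), ← ENNReal.ofReal_mul (by positivity)]
  refine ENNReal.ofReal_le_ofReal ?_
  set a := 1 + ‖v‖ ^ 2
  set b := 1 + ‖w‖ ^ 2
  set c := 1 + ‖s • v + (1 - s) • w‖ ^ 2
  have ha : 0 < a := by positivity
  have hb : 0 < b := by positivity
  have hc : 0 < c := by positivity
  have hcγ : c ^ γ ≤ 4 ^ γ * ((s ^ 2) ^ γ * a ^ γ + ((1 - s) ^ 2) ^ γ * b ^ γ) := by
    calc c ^ γ ≤ (2 * (s ^ 2 * a + (1 - s) ^ 2 * b)) ^ γ := by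
          gcongr
          exact one_add_norm_segment_sq_le s v w
      _ = 2 ^ γ * (s ^ 2 * a + (1 - s) ^ 2 * b) ^ γ := mul_rpow zero_le_two (by positivity)
      _ ≤ 2 ^ γ * (2 ^ γ * ((s ^ 2 * a) ^ γ + ((1 - s) ^ 2 * b) ^ γ)) := by
          gcongr
          exact add_rpow_le_two_rpow_mul (by positivity) (by positivity) hγ
      _ = 4 ^ γ * ((s ^ 2) ^ γ * a ^ γ + ((1 - s) ^ 2) ^ γ * b ^ γ) := by
          rw [mul_rpow (sq_nonneg s) ha.le, mul_rpow (sq_nonneg (1 - s)) hb.le, ← mul_assoc,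
            ← mul_rpow zero_le_two zero_le_two]
          norm_num
  have haγ : 0 < a ^ γ := by positivity
  have hbγ : 0 < b ^ γ := by positivity
  rw [rpow_neg ha.le, rpow_neg hb.le, rpow_neg hc.le]
  field_simp
  linarith

section Haar

variable [FiniteDimensional ℝ E] [MeasurableSpace E] [BorelSpace E]
  (μ : Measure E) [μ.IsAddHaarMeasure]

lemma lintegral_bracketWeight_lt_top {γ : ℝ} (hγ : finrank ℝ E < 2 * γ) :
    ∫⁻ v, bracketWeight γ v ∂μ < ∞ := by
  have := (integrable_rpow_neg_one_add_norm_sq (μ := μ) hγ).lintegral_lt_top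
  simpa only [bracketWeight, neg_div, mul_div_cancel_left₀ γ (two_ne_zero' ℝ)] using this

lemma lintegral_comp_smul_add {r : ℝ} (hr : r ≠ 0) (y : E) {G : E → ℝ≥0∞} (hG : Measurable G) :
    ∫⁻ v, G (r • v + y) ∂μ = ENNReal.ofReal |(r ^ finrank ℝ E)⁻¹| * ∫⁻ v, G v ∂μ := by
  have hG' : Measurable fun u ↦ G (u + y) := by fun_prop
  rw [← lintegral_map hG' (measurable_const_smul r), Measure.map_addHaar_smul _ hr,
    lintegral_smul_measure, lintegral_add_right_eq_self, smul_eq_mul]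

variable {μ}

lemma lintegral_prod_mul_comp_smul_add_smul {r : ℝ} (hr : r ≠ 0) (t : ℝ) {W G : E → ℝ≥0∞}
    (hW : Measurable W) (hG : Measurable G) :
    ∫⁻ p, W p.2 * G (r • p.1 + t • p.2) ∂μ.prod μ =
      ENNReal.ofReal |(r ^ finrank ℝ E)⁻¹| * ((∫⁻ v, W v ∂μ) * ∫⁻ v, G v ∂μ) := by
  rw [lintegral_prod_symm _ (by fun_prop)]
  have inner (w : E) : ∫⁻ v, W w * G (r • v + t • w) ∂μ =
      W w * (ENNReal.ofReal |(r ^ finrank ℝ E)⁻¹| * ∫⁻ v, G v ∂μ) := by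
    rw [lintegral_const_mul _ (by fun_prop), lintegral_comp_smul_add μ hr _ hG]
  simp_rw [inner]
  rw [lintegral_mul_const _ hW]
  ring

lemma sq_rpow_mul_abs_inv_pow_le_one {s γ : ℝ} {n : ℕ} (hs : 0 < s) (hs' : s ≤ 1)
    (hn : n ≤ 2 * γ) : (s ^ 2) ^ γ * |(s ^ n)⁻¹| ≤ 1 := by
  rw [abs_of_pos (by positivity), ← div_eq_mul_inv, div_le_one (by positivity),
    ← rpow_natCast s 2, ← rpow_mul hs.le, ← rpow_natCast s n]
  exact rpow_le_rpow_of_exponent_ge hs hs' (by simpa using hn)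

lemma lintegral_bracketWeight_mul_comp_segment_le {γ s : ℝ} (hγ : finrank ℝ E ≤ 2 * γ)
    (hs : s ∈ Ioo 0 1) {G : E → ℝ≥0∞} (hG : Measurable G) :
    ∫⁻ p, bracketWeight γ p.1 * bracketWeight γ p.2 * G (s • p.1 + (1 - s) • p.2) ∂μ.prod μ ≤
      2 * ENNReal.ofReal (4 ^ γ) *
        ((∫⁻ v, bracketWeight γ v ∂μ) * ∫⁻ v, bracketWeight γ v * G v ∂μ) := by
  have hγ₀ : 0 ≤ γ := by linarith [(finrank ℝ E).cast_nonneg (α := ℝ)]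
  let H (v : E) : ℝ≥0∞ := bracketWeight γ v * G v
  have hH : Measurable H := by fun_prop
  set k := ENNReal.ofReal (4 ^ γ)
  set X := (∫⁻ v, bracketWeight γ v ∂μ) * ∫⁻ v, H v ∂μ
  have hhalf {r : ℝ} (hr : r ∈ Ioo 0 1) (t : ℝ) : ENNReal.ofReal ((r ^ 2) ^ γ) *
      ∫⁻ p, bracketWeight γ p.2 * H (r • p.1 + t • p.2) ∂μ.prod μ ≤ X := by
    rw [lintegral_prod_mul_comp_smul_add_smul hr.1.ne' t (by fun_prop) hH, ← mul_assoc,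
      ← ENNReal.ofReal_mul (by positivity)]
    exact mul_le_of_le_one_left' (ENNReal.ofReal_le_one.2
      (sq_rpow_mul_abs_inv_pow_le_one hr.1 hr.2.le hγ))
  have hswap : ∫⁻ p, bracketWeight γ p.1 * H (s • p.1 + (1 - s) • p.2) ∂μ.prod μ =
      ∫⁻ p, bracketWeight γ p.2 * H ((1 - s) • p.1 + s • p.2) ∂μ.prod μ := by
    rw [← lintegral_prod_swap]
    simp only [Prod.fst_swap, Prod.snd_swap, add_comm]
  calc ∫⁻ p, bracketWeight γ p.1 * bracketWeight γ p.2 * G (s • p.1 + (1 - s) • p.2) ∂μ.prod μ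
      ≤ ∫⁻ p, k * (ENNReal.ofReal ((s ^ 2) ^ γ) *
            (bracketWeight γ p.2 * H (s • p.1 + (1 - s) • p.2)) +
          ENNReal.ofReal (((1 - s) ^ 2) ^ γ) *
            (bracketWeight γ p.1 * H (s • p.1 + (1 - s) • p.2))) ∂μ.prod μ := by
        refine lintegral_mono fun p ↦ ?_
        refine (mul_le_mul_left (bracketWeight_mul_le hγ₀ s p.1 p.2) _).trans_eq ?_
        simp only [H, k]
        ring
    _ = k * (ENNReal.ofReal ((s ^ 2) ^ γ) *
            ∫⁻ p, bracketWeight γ p.2 * H (s • p.1 + (1 - s) • p.2) ∂μ.prod μ +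
          ENNReal.ofReal (((1 - s) ^ 2) ^ γ) *
            ∫⁻ p, bracketWeight γ p.1 * H (s • p.1 + (1 - s) • p.2) ∂μ.prod μ) := by
        rw [lintegral_const_mul _ (by fun_prop), lintegral_add_left (by fun_prop),
          lintegral_const_mul _ (by fun_prop), lintegral_const_mul _ (by fun_prop)]
    _ ≤ k * (X + X) := by
        rw [hswap]
        gcongr
        · exact hhalf hs _
        · exact hhalf ⟨sub_pos.2 hs.2, sub_lt_self 1 hs.1⟩ _
    _ = 2 * k * X := by ring

end Haar

lemma enorm_sub_sq_le_mul_lintegral_segment {h : E → F} (hh : ContDiff ℝ 1 h) (v w : E) :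
    ‖h v - h w‖ₑ ^ 2 ≤
      ‖v - w‖ₑ ^ 2 * ∫⁻ s in Ioo (0 : ℝ) 1, ‖fderiv ℝ h (s • v + (1 - s) • w)‖ₑ ^ 2 := by
  let c (s : ℝ) : E := s • v + (1 - s) • w
  have hc (s : ℝ) : HasDerivAt c (v - w) s := by
    simpa [c, sub_eq_add_neg] using ((hasDerivAt_id s).smul_const v).fun_add
      (((hasDerivAt_id s).const_sub 1).smul_const w)
  have hderiv (s : ℝ) : deriv (h ∘ c) s = fderiv ℝ h (c s) (v - w) :=
    ((hh.differentiable one_ne_zero (c s)).hasFDerivAt.comp_hasDerivAt s (hc s)).deriv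
  have hc1 : ContDiff ℝ 1 c := by fun_prop
  have hmeas : Continuous fun s ↦ ‖fderiv ℝ h (c s)‖ₑ :=
    ((hh.continuous_fderiv one_ne_zero).comp hc1.continuous).enorm
  have hpath : ‖h v - h w‖ₑ ≤ ‖v - w‖ₑ * ∫⁻ s in Ioo (0 : ℝ) 1, ‖fderiv ℝ h (c s)‖ₑ := by
    calc ‖h v - h w‖ₑ = ‖(h ∘ c) 1 - (h ∘ c) 0‖ₑ := by simp [c]
      _ ≤ ∫⁻ s in Icc (0 : ℝ) 1, ‖deriv (h ∘ c) s‖ₑ :=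
          enorm_sub_le_lintegral_deriv_of_contDiffOn_Icc (hh.comp hc1).contDiffOn zero_le_one
      _ ≤ ∫⁻ s in Ioo (0 : ℝ) 1, ‖v - w‖ₑ * ‖fderiv ℝ h (c s)‖ₑ := by
          rw [setLIntegral_congr Ioo_ae_eq_Icc.symm]
          refine lintegral_mono fun s ↦ ?_
          rw [hderiv, mul_comm]
          exact ContinuousLinearMap.le_opENorm _ _
      _ = _ := lintegral_const_mul _ hmeas.measurable
  calc ‖h v - h w‖ₑ ^ 2 ≤ (‖v - w‖ₑ * ∫⁻ s in Ioo (0 : ℝ) 1, ‖fderiv ℝ h (c s)‖ₑ) ^ 2 := by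
        gcongr
    _ = ‖v - w‖ₑ ^ 2 * (∫⁻ s in Ioo (0 : ℝ) 1, ‖fderiv ℝ h (c s)‖ₑ) ^ 2 := mul_pow _ _ 2
    _ ≤ ‖v - w‖ₑ ^ 2 * ∫⁻ s in Ioo (0 : ℝ) 1, ‖fderiv ℝ h (c s)‖ₑ ^ 2 := by
        gcongr
        simpa using sq_lintegral_le_measure_univ_mul (volume.restrict (Ioo (0 : ℝ) 1))
          hmeas.measurable.aemeasurable

lemma enorm_sub_sq_mul_bracketWeight_le (γ : ℝ) {h : E → F} (hh : ContDiff ℝ 1 h) (v w : E) :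
    ‖h v - h w‖ₑ ^ 2 * (bracketWeight (γ + 1) v * bracketWeight (γ + 1) w) ≤
      2 * ∫⁻ s in Ioo (0 : ℝ) 1,
        bracketWeight γ v * bracketWeight γ w * ‖fderiv ℝ h (s • v + (1 - s) • w)‖ₑ ^ 2 := by
  have hmeas : Continuous fun s : ℝ ↦ ‖fderiv ℝ h (s • v + (1 - s) • w)‖ₑ ^ 2 :=
    (ENNReal.continuous_pow 2).comp
      ((hh.continuous_fderiv one_ne_zero).comp (by fun_prop)).enorm
  rw [lintegral_const_mul _ hmeas.measurable]
  set I := ∫⁻ s in Ioo (0 : ℝ) 1, ‖fderiv ℝ h (s • v + (1 - s) • w)‖ₑ ^ 2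
  calc ‖h v - h w‖ₑ ^ 2 * (bracketWeight (γ + 1) v * bracketWeight (γ + 1) w)
      ≤ ‖v - w‖ₑ ^ 2 * I * (bracketWeight (γ + 1) v * bracketWeight (γ + 1) w) := by
        gcongr
        exact enorm_sub_sq_le_mul_lintegral_segment hh v w
    _ = ‖v - w‖ₑ ^ 2 * (bracketWeight 1 v * bracketWeight 1 w) *
          (bracketWeight γ v * bracketWeight γ w * I) := by
        rw [bracketWeight_add, bracketWeight_add]
        ring
    _ ≤ 2 * (bracketWeight γ v * bracketWeight γ w * I) := by
        gcongr
        exact enorm_sub_sq_mul_bracketWeight_one_le v w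

variable [FiniteDimensional ℝ E] [MeasurableSpace E] [BorelSpace E]
  {μ : Measure E} [μ.IsAddHaarMeasure]

lemma lintegral_prod_enorm_sub_sq_mul_bracketWeight_le {γ : ℝ} (hγ : finrank ℝ E ≤ 2 * γ)
    {h : E → F} (hh : ContDiff ℝ 1 h) :
    ∫⁻ p, ‖h p.1 - h p.2‖ₑ ^ 2 * (bracketWeight (γ + 1) p.1 * bracketWeight (γ + 1) p.2)
        ∂μ.prod μ ≤
      4 * ENNReal.ofReal (4 ^ γ) *
        ((∫⁻ v, bracketWeight γ v ∂μ) * ∫⁻ v, bracketWeight γ v * ‖fderiv ℝ h v‖ₑ ^ 2 ∂μ) := by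
  let G (v : E) : ℝ≥0∞ := ‖fderiv ℝ h v‖ₑ ^ 2
  have hG : Measurable G := (hh.continuous_fderiv one_ne_zero).enorm.measurable.pow_const 2
  let A (p : E × E) (s : ℝ) : ℝ≥0∞ :=
    bracketWeight γ p.1 * bracketWeight γ p.2 * G (s • p.1 + (1 - s) • p.2)
  have hA : Measurable (Function.uncurry A) := by
    unfold A Function.uncurry
    fun_prop
  set X := (∫⁻ v, bracketWeight γ v ∂μ) * ∫⁻ v, bracketWeight γ v * G v ∂μ
  calc _ ≤ ∫⁻ p, 2 * (∫⁻ s in Ioo (0 : ℝ) 1, A p s) ∂μ.prod μ :=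
        lintegral_mono fun p ↦ enorm_sub_sq_mul_bracketWeight_le γ hh p.1 p.2
    _ = 2 * ∫⁻ s in Ioo (0 : ℝ) 1, ∫⁻ p, A p s ∂μ.prod μ := by
        rw [lintegral_const_mul' _ _ (by simp), lintegral_lintegral_swap hA.aemeasurable]
    _ ≤ 2 * ∫⁻ _ in Ioo (0 : ℝ) 1, 2 * ENNReal.ofReal (4 ^ γ) * X := by
        gcongr 2 * ?_
        exact setLIntegral_mono measurable_const fun s hs ↦
          lintegral_bracketWeight_mul_comp_segment_le hγ hs hG
    _ = 4 * ENNReal.ofReal (4 ^ γ) * X := by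
        rw [setLIntegral_const, Real.volume_Ioo]
        norm_num
        ring

variable [CompleteSpace F] {γ : ℝ}

lemma measure_univ_mul_lintegral_enorm_sub_average_sq_le (hγ : finrank ℝ E ≤ 2 * γ)
    {p : E → ℝ≥0∞} {c : ℝ≥0∞} (hp : Measurable p) (hpc : ∀ v, p v ≤ c * bracketWeight (γ + 1) v)
    [IsFiniteMeasure (μ.withDensity p)] {h : E → F} (hh : ContDiff ℝ 1 h)
    (hint : Integrable h (μ.withDensity p)) :
    μ.withDensity p univ *
        ∫⁻ v, ‖h v - ⨍ w, h w ∂μ.withDensity p‖ₑ ^ 2 ∂μ.withDensity p ≤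
      c ^ 2 * (4 * ENNReal.ofReal (4 ^ γ) *
        ((∫⁻ v, bracketWeight γ v ∂μ) * ∫⁻ v, bracketWeight γ v * ‖fderiv ℝ h v‖ₑ ^ 2 ∂μ)) := by
  set ν := μ.withDensity p
  have hdiff : Measurable fun q : E × E ↦ ‖h q.1 - h q.2‖ₑ ^ 2 :=
    (((hh.continuous.comp continuous_fst).sub
      (hh.continuous.comp continuous_snd)).enorm.measurable).pow_const 2
  calc ν univ * ∫⁻ v, ‖h v - ⨍ w, h w ∂ν‖ₑ ^ 2 ∂ν
      = ∫⁻ v, ν univ * ‖h v - ⨍ w, h w ∂ν‖ₑ ^ 2 ∂ν :=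
        (lintegral_const_mul' _ _ (measure_ne_top ν univ)).symm
    _ ≤ ∫⁻ v, ∫⁻ w, ‖h v - h w‖ₑ ^ 2 ∂ν ∂ν :=
        lintegral_mono fun v ↦ measure_univ_mul_enorm_sub_average_sq_le ν hint (h v)
    _ = ∫⁻ q, p q.1 * p q.2 * ‖h q.1 - h q.2‖ₑ ^ 2 ∂μ.prod μ := by
        rw [← lintegral_prod (fun q : E × E ↦ ‖h q.1 - h q.2‖ₑ ^ 2) hdiff.aemeasurable,
          prod_withDensity hp hp, lintegral_withDensity_eq_lintegral_mul _ (by fun_prop) hdiff]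
        rfl
    _ ≤ ∫⁻ q, c ^ 2 * (‖h q.1 - h q.2‖ₑ ^ 2 *
          (bracketWeight (γ + 1) q.1 * bracketWeight (γ + 1) q.2)) ∂μ.prod μ := by
        refine lintegral_mono fun q ↦ ?_
        calc p q.1 * p q.2 * ‖h q.1 - h q.2‖ₑ ^ 2
            ≤ c * bracketWeight (γ + 1) q.1 * (c * bracketWeight (γ + 1) q.2) *
                ‖h q.1 - h q.2‖ₑ ^ 2 := by gcongr <;> exact hpc _
          _ = _ := by ring
    _ ≤ _ := by
        rw [lintegral_const_mul _ (by fun_prop)]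
        gcongr
        exact lintegral_prod_enorm_sub_sq_mul_bracketWeight_le hγ hh

lemma exists_lintegral_enorm_sub_average_sq_le (hγ : finrank ℝ E < 2 * γ) {ρ : E → ℝ≥0∞}
    (hρ : Measurable ρ) {a b : ℝ≥0∞} (ha : a ≠ 0) (hb : b ≠ ∞)
    (hρ_ge : ∀ v, a * bracketWeight γ v ≤ ρ v) (hρ_le : ∀ v, ρ v ≤ b * bracketWeight γ v) :
    ∃ κ ≠ ∞, ∀ h : E → F, ContDiff ℝ 1 h →
      Integrable h (μ.withDensity fun v ↦ ρ v * bracketWeight 1 v) →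
      ∫⁻ v, ‖h v - ⨍ w, h w ∂μ.withDensity fun v ↦ ρ v * bracketWeight 1 v‖ₑ ^ 2
          ∂μ.withDensity (fun v ↦ ρ v * bracketWeight 1 v) ≤
        κ * ∫⁻ v, ρ v * ‖fderiv ℝ h v‖ₑ ^ 2 ∂μ := by
  let p (v : E) : ℝ≥0∞ := ρ v * bracketWeight 1 v
  have hp : Measurable p := by fun_prop
  have hp_le (v : E) : p v ≤ b * bracketWeight (γ + 1) v := by
    rw [bracketWeight_add, ← mul_assoc]
    exact mul_le_mul_left (hρ_le v) _
  set I := ∫⁻ v, bracketWeight γ v ∂μ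
  have hI : I ≠ ∞ := (lintegral_bracketWeight_lt_top μ hγ).ne
  have hfin : μ.withDensity p univ ≠ ∞ := by
    rw [withDensity_apply _ .univ, setLIntegral_univ]
    refine ((lintegral_mono hp_le).trans_lt ?_).ne
    rw [lintegral_const_mul _ (by fun_prop)]
    exact ENNReal.mul_lt_top hb.lt_top (lintegral_bracketWeight_lt_top μ (by linarith))
  have hp0 (v : E) : p v ≠ 0 := by
    have hρv : ρ v ≠ 0 := fun h0 ↦ mul_ne_zero ha (bracketWeight_ne_zero γ v)
      (le_zero_iff.1 ((hρ_ge v).trans h0.le))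
    exact mul_ne_zero hρv (bracketWeight_ne_zero 1 v)
  have hpos := withDensity_univ_ne_zero (μ := μ) hp.aemeasurable hp0
  have : IsFiniteMeasure (μ.withDensity p) := ⟨hfin.lt_top⟩
  refine ⟨b ^ 2 * (4 * ENNReal.ofReal (4 ^ γ) * (I * a⁻¹)) / μ.withDensity p univ, by finiteness,
    fun h hh hint ↦ ?_⟩
  have hgrad : ∫⁻ v, bracketWeight γ v * ‖fderiv ℝ h v‖ₑ ^ 2 ∂μ ≤
      a⁻¹ * ∫⁻ v, ρ v * ‖fderiv ℝ h v‖ₑ ^ 2 ∂μ := by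
    rw [← lintegral_const_mul' _ _ (ENNReal.inv_ne_top.2 ha)]
    refine lintegral_mono fun v ↦ ?_
    rw [← mul_assoc]
    gcongr
    have hρ_top : ρ v ≠ ∞ := ne_top_of_le_ne_top (ENNReal.mul_ne_top hb
      (bracketWeight_ne_top γ v)) (hρ_le v)
    rw [mul_comm, ← div_eq_mul_inv, ENNReal.le_div_iff_mul_le (.inl ha) (.inr hρ_top), mul_comm]
    exact hρ_ge v
  rw [ENNReal.mul_comm_div, ← mul_div_assoc, ENNReal.le_div_iff_mul_le (.inl hpos) (.inl hfin),
    mul_comm]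
  refine (measure_univ_mul_lintegral_enorm_sub_average_sq_le hγ.le hp hp_le hh hint).trans ?_
  calc b ^ 2 * (4 * ENNReal.ofReal (4 ^ γ) *
        (I * ∫⁻ v, bracketWeight γ v * ‖fderiv ℝ h v‖ₑ ^ 2 ∂μ))
      ≤ b ^ 2 * (4 * ENNReal.ofReal (4 ^ γ) *
        (I * (a⁻¹ * ∫⁻ v, ρ v * ‖fderiv ℝ h v‖ₑ ^ 2 ∂μ))) := by gcongr
    _ = _ := by ring

theorem exists_integral_norm_sub_sq_le (hγ : finrank ℝ E < 2 * γ) {ρ : E → ℝ}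
    (hρ : Measurable ρ) {a b : ℝ} (ha : 0 < a) (hρ_ge : ∀ v, a * (1 + ‖v‖ ^ 2) ^ (-γ) ≤ ρ v)
    (hρ_le : ∀ v, ρ v ≤ b * (1 + ‖v‖ ^ 2) ^ (-γ)) :
    ∃ P : ℝ, 0 ≤ P ∧ ∀ h : E → F, ContDiff ℝ 1 h →
      Integrable (fun v ↦ (ρ v / (1 + ‖v‖ ^ 2)) • h v) μ →
      Integrable (fun v ↦ ρ v * ‖fderiv ℝ h v‖ ^ 2) μ →
      Integrable (fun v ↦ ρ v / (1 + ‖v‖ ^ 2) *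
        ‖h v - weightedMean (fun w ↦ ρ w / (1 + ‖w‖ ^ 2)) h μ‖ ^ 2) μ ∧
      ∫ v, ρ v / (1 + ‖v‖ ^ 2) *
          ‖h v - weightedMean (fun w ↦ ρ w / (1 + ‖w‖ ^ 2)) h μ‖ ^ 2 ∂μ ≤
        P * ∫ v, ρ v * ‖fderiv ℝ h v‖ ^ 2 ∂μ := by
  let q (v : E) : ℝ := ρ v / (1 + ‖v‖ ^ 2)
  have hρ0 (v : E) : 0 ≤ ρ v := le_trans (by positivity) (hρ_ge v)
  have hq0 : 0 ≤ q := fun v ↦ div_nonneg (hρ0 v) (by positivity)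
  have hq : Measurable q := by fun_prop
  have hq_eq : (fun v ↦ ENNReal.ofReal (ρ v) * bracketWeight 1 v) =
      fun v ↦ ENNReal.ofReal (q v) := by
    ext v
    rw [bracketWeight, rpow_neg_one, ← ENNReal.ofReal_mul (hρ0 v), ← div_eq_mul_inv]
  obtain ⟨κ, hκ, hbound⟩ := exists_lintegral_enorm_sub_average_sq_le (F := F) (μ := μ) hγ
    hρ.ennreal_ofReal (ENNReal.ofReal_pos.2 ha).ne' (ENNReal.ofReal_ne_top (r := b))
    (fun v ↦ by
      rw [bracketWeight, ← ENNReal.ofReal_mul ha.le]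
      exact ENNReal.ofReal_le_ofReal (hρ_ge v))
    (fun v ↦ by
      rw [bracketWeight, ← ENNReal.ofReal_mul' (by positivity)]
      exact ENNReal.ofReal_le_ofReal (hρ_le v))
  refine ⟨κ.toReal, ENNReal.toReal_nonneg, fun h hh hint hgrad ↦ ?_⟩
  have hint' : Integrable h (μ.withDensity fun v ↦ ENNReal.ofReal (q v)) := by
    rw [integrable_withDensity_iff_integrable_smul' hq.ennreal_ofReal (by simp)]
    simpa only [ENNReal.toReal_ofReal (hq0 _)] using hint
  have hdev : Continuous fun v ↦ h v - weightedMean q h μ := hh.continuous.sub continuous_const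
  refine integrable_and_integral_le_of_lintegral_ofReal_le (Measurable.aestronglyMeasurable
    (hq.mul (hdev.norm.pow 2).measurable)) (fun v ↦ mul_nonneg (hq0 v) (sq_nonneg _)) hgrad
    (fun v ↦ mul_nonneg (hρ0 v) (sq_nonneg _)) hκ ?_
  have hle := hbound h hh (hq_eq ▸ hint')
  rw [hq_eq, average_withDensity_ofReal hq hq0, lintegral_withDensity_eq_lintegral_mul _
    hq.ennreal_ofReal (hdev.enorm.measurable.pow_const 2)] at hle
  simpa only [Pi.mul_apply, Pi.pow_apply, ofReal_mul_norm_sq (hq0 _),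
    ofReal_mul_norm_sq (hρ0 _)] using hle

end HardyPoincare

section GroundState

open scoped ENNReal InnerProductSpace

section Calculus

variable {E F : Type*} [NormedAddCommGroup E] [NormedSpace ℝ E] [NormedAddCommGroup F]
  [NormedSpace ℝ F] {M : E → ℝ} {N : E → F}

/-- `M ∇(N / M)`, the gradient of `N` conjugated by `M`: its squared `L²` norm is the Dirichlet
form of `N` in the ground state representation. -/
def groundStateGrad (M : E → ℝ) (N : E → F) (v : E) : E →L[ℝ] F :=
  M v • fderiv ℝ (fun w ↦ (M w)⁻¹ • N w) v

lemma contDiff_inv_smul {n : WithTop ℕ∞} (hM : ContDiff ℝ n M) (hM0 : ∀ v, M v ≠ 0)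
    (hN : ContDiff ℝ n N) : ContDiff ℝ n fun v ↦ (M v)⁻¹ • N v :=
  (hM.inv hM0).smul hN

lemma continuous_groundStateGrad (hM : ContDiff ℝ 1 M) (hM0 : ∀ v, M v ≠ 0)
    (hN : ContDiff ℝ 1 N) : Continuous (groundStateGrad M N) :=
  hM.continuous.smul ((contDiff_inv_smul hM hM0 hN).continuous_fderiv one_ne_zero)

lemma smul_groundStateGrad_apply {v : E} (hM : DifferentiableAt ℝ M v) (hMv : M v ≠ 0)
    (hN : DifferentiableAt ℝ N v) (e : E) :
    M v • groundStateGrad M N v e = M v • fderiv ℝ N v e - fderiv ℝ M v e • N v := by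
  have hinv : HasFDerivAt (fun w ↦ (M w)⁻¹) (-(M v ^ 2)⁻¹ • fderiv ℝ M v) v :=
    (hasDerivAt_inv hMv).comp_hasFDerivAt v hM.hasFDerivAt
  rw [groundStateGrad, (hinv.fun_smul hN.hasFDerivAt).fderiv]
  simp only [add_apply, smul_apply, ContinuousLinearMap.smulRight_apply, smul_add, smul_smul,
    smul_eq_mul, sub_eq_add_neg, ← neg_smul]
  congr 2 <;> field_simp

lemma contDiff_fderiv_apply {f : E → F} (hf : ContDiff ℝ 2 f) (e : E) :
    ContDiff ℝ 1 fun v ↦ fderiv ℝ f v e :=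
  (hf.fderiv_right (m := 1) le_rfl).clm_apply contDiff_const

lemma contDiff_groundStateGrad_apply (hM : ContDiff ℝ 2 M) (hM0 : ∀ v, M v ≠ 0)
    (hN : ContDiff ℝ 2 N) (e : E) : ContDiff ℝ 1 fun v ↦ groundStateGrad M N v e :=
  (hM.of_le one_le_two).smul (contDiff_fderiv_apply (contDiff_inv_smul hM hM0 hN) e)

lemma fderiv_smul_groundStateGrad_apply (hM : ContDiff ℝ 2 M) (hM0 : ∀ v, M v ≠ 0)
    (hN : ContDiff ℝ 2 N) (e v : E) :
    fderiv ℝ (fun w ↦ M w • groundStateGrad M N w e) v e =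
      M v • fderiv ℝ (fun w ↦ fderiv ℝ N w e) v e -
        fderiv ℝ (fun w ↦ fderiv ℝ M w e) v e • N v := by
  have hM' := hM.differentiable two_ne_zero
  have hN' := hN.differentiable two_ne_zero
  have hdM := (contDiff_fderiv_apply hM e).differentiable one_ne_zero
  have hdN := (contDiff_fderiv_apply hN e).differentiable one_ne_zero
  simp_rw [fun w ↦ smul_groundStateGrad_apply (hM' w) (hM0 w) (hN' w) e]
  rw [fderiv_fun_sub ((hM' v).fun_smul (hdN v)) ((hdM v).fun_smul (hN' v)),
    fderiv_fun_smul (hM' v) (hdN v), fderiv_fun_smul (hdM v) (hN' v)]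
  simp only [add_apply, sub_apply, smul_apply, ContinuousLinearMap.smulRight_apply]
  abel

end Calculus

lemma opNorm_sq_le_sum_apply_single {d : ℕ} {F : Type*} [NormedAddCommGroup F] [NormedSpace ℝ F]
    (L : EuclideanSpace ℝ (Fin d) →L[ℝ] F) :
    ‖L‖ ^ 2 ≤ ∑ i, ‖L (EuclideanSpace.single i 1)‖ ^ 2 := by
  refine (pow_le_pow_left₀ (norm_nonneg _) (L.opNorm_le_bound (sqrt_nonneg _) fun v ↦ ?_) 2).trans
    (sq_sqrt (by positivity)).le
  calc ‖L v‖ = ‖∑ i, v i • L (EuclideanSpace.single i 1)‖ := by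
        conv_lhs => rw [← (EuclideanSpace.basisFun (Fin d) ℝ).sum_repr v]
        simp
    _ ≤ ∑ i, ‖L (EuclideanSpace.single i 1)‖ * |v i| :=
        norm_sum_le_of_le _ fun i _ ↦ by rw [norm_smul, norm_eq_abs, mul_comm]
    _ ≤ √(∑ i, ‖L (EuclideanSpace.single i 1)‖ ^ 2) * ‖v‖ := by
        rw [EuclideanSpace.norm_eq]
        simpa using sum_mul_le_sqrt_mul_sqrt Finset.univ
          (fun i ↦ ‖L (EuclideanSpace.single i 1)‖) fun i ↦ |v i|

lemma memLp_clm_apply {α E F : Type*} [MeasurableSpace α] [NormedAddCommGroup E] [NormedSpace ℝ E]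
    [NormedAddCommGroup F] [NormedSpace ℝ F] {p : ℝ≥0∞} {μ : Measure α} {L : α → E →L[ℝ] F}
    (hL : MemLp L p μ) (e : E) : MemLp (fun x ↦ L x e) p μ :=
  (ContinuousLinearMap.apply ℝ F e : (E →L[ℝ] F) →L[ℝ] F).comp_memLp' hL

variable {d : ℕ} {F : Type*} [NormedAddCommGroup F] {M : EuclideanSpace ℝ (Fin d) → ℝ}
  {N : EuclideanSpace ℝ (Fin d) → F}

/-- The Schrödinger operator `Δ - ΔM / M`, whose potential is chosen so that it annihilates `M`. -/
def schrodinger [NormedSpace ℝ F] (M : EuclideanSpace ℝ (Fin d) → ℝ)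
    (N : EuclideanSpace ℝ (Fin d) → F) (v : EuclideanSpace ℝ (Fin d)) : F :=
  lap N v - (lap M v / M v) • N v

lemma sum_fderiv_smul_groundStateGrad [NormedSpace ℝ F] (hM : ContDiff ℝ 2 M)
    (hM0 : ∀ v, M v ≠ 0) (hN : ContDiff ℝ 2 N) (v : EuclideanSpace ℝ (Fin d)) :
    ∑ i, fderiv ℝ (fun w ↦ M w • groundStateGrad M N w (EuclideanSpace.single i 1)) v
      (EuclideanSpace.single i 1) = M v • schrodinger M N v := by
  simp_rw [fderiv_smul_groundStateGrad_apply hM hM0 hN]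
  rw [Finset.sum_sub_distrib, ← Finset.smul_sum, ← Finset.sum_smul, schrodinger, smul_sub,
    smul_smul, mul_div_cancel₀ _ (hM0 v), lap, lap]

lemma integral_smul_schrodinger_eq_zero [NormedSpace ℝ F] (hM : ContDiff ℝ 2 M)
    (hM0 : ∀ v, M v ≠ 0) (hN : ContDiff ℝ 2 N) (hM2 : MemLp M 2)
    (hgrad : MemLp (groundStateGrad M N) 2)
    (hint : Integrable fun v ↦ M v • schrodinger M N v) :
    ∫ v, M v • schrodinger M N v = 0 := by
  simp_rw [← sum_fderiv_smul_groundStateGrad hM hM0 hN] at hint ⊢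
  refine integral_sum_fderiv_eq_zero (fun i ↦
    (hM.of_le one_le_two).smul (contDiff_groundStateGrad_apply hM hM0 hN _)) (fun i ↦ ?_) hint
  exact memLp_one_iff_integrable.1 ((memLp_clm_apply hgrad _).smul hM2)

variable [InnerProductSpace ℝ F]

lemma sum_fderiv_inner_groundStateGrad (hM : ContDiff ℝ 2 M) (hM0 : ∀ v, M v ≠ 0)
    (hN : ContDiff ℝ 2 N) (v : EuclideanSpace ℝ (Fin d)) :
    ∑ i, fderiv ℝ (fun w ↦ ⟪N w, groundStateGrad M N w (EuclideanSpace.single i 1)⟫_ℝ) v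
      (EuclideanSpace.single i 1) =
      ⟪N v, schrodinger M N v⟫_ℝ +
        ∑ i, ‖groundStateGrad M N v (EuclideanSpace.single i 1)‖ ^ 2 := by
  have hquot := (contDiff_inv_smul hM hM0 hN).differentiable two_ne_zero
  have hflux (i : Fin d) :
      Differentiable ℝ fun w ↦ M w • groundStateGrad M N w (EuclideanSpace.single i 1) :=
    (hM.differentiable two_ne_zero).smul
      ((contDiff_groundStateGrad_apply hM hM0 hN _).differentiable one_ne_zero)
  have hinner (i : Fin d) (w : EuclideanSpace ℝ (Fin d)) :
      ⟪N w, groundStateGrad M N w (EuclideanSpace.single i 1)⟫_ℝ =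
        ⟪(M w)⁻¹ • N w, M w • groundStateGrad M N w (EuclideanSpace.single i 1)⟫_ℝ := by
    rw [real_inner_smul_left, real_inner_smul_right, inv_mul_cancel_left₀ (hM0 w)]
  simp_rw [hinner, fun i ↦ fderiv_inner_apply ℝ (hquot v) (hflux i v), Finset.sum_add_distrib]
  rw [← inner_sum, sum_fderiv_smul_groundStateGrad hM hM0 hN, real_inner_smul_left,
    real_inner_smul_right, inv_mul_cancel_left₀ (hM0 v)]
  congr! 3 with i
  rw [real_inner_smul_right, ← real_inner_smul_left, ← real_inner_self_eq_norm_sq]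
  rfl

/- Not an equality, since Green's identity produces the Hilbert-Schmidt norm of the gradient, and
`‖·‖` is the operator norm. -/
lemma integral_norm_groundStateGrad_sq_le (hM : ContDiff ℝ 2 M) (hM0 : ∀ v, M v ≠ 0)
    (hN : ContDiff ℝ 2 N) (hN2 : MemLp N 2) (hgrad : MemLp (groundStateGrad M N) 2)
    (hint : Integrable fun v ↦ ⟪N v, schrodinger M N v⟫_ℝ) :
    ∫ v, ‖groundStateGrad M N v‖ ^ 2 ≤ -∫ v, ⟪N v, schrodinger M N v⟫_ℝ := by
  have hpartial (i : Fin d) :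
      MemLp (fun v ↦ groundStateGrad M N v (EuclideanSpace.single i 1)) 2 :=
    memLp_clm_apply hgrad _
  have hsum : Integrable fun v ↦
      ∑ i, ‖groundStateGrad M N v (EuclideanSpace.single i 1)‖ ^ 2 :=
    integrable_finsetSum _ fun i _ ↦ (hpartial i).integrable_norm_pow two_ne_zero
  have hgreen : ∫ v, ∑ i, fderiv ℝ (fun w ↦
      ⟪N w, groundStateGrad M N w (EuclideanSpace.single i 1)⟫_ℝ) v
        (EuclideanSpace.single i 1) = 0 := by
    refine integral_sum_fderiv_eq_zero
      (fun i ↦ (hN.of_le one_le_two).inner ℝ (contDiff_groundStateGrad_apply hM hM0 hN _))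
      (fun i ↦ memLp_one_iff_integrable.1
        ((innerSL ℝ).memLp_of_bilin 1 hN2 (memLp_clm_apply hgrad _))) ?_
    simp_rw [sum_fderiv_inner_groundStateGrad hM hM0 hN]
    exact hint.add hsum
  simp_rw [sum_fderiv_inner_groundStateGrad hM hM0 hN] at hgreen
  rw [integral_add hint hsum, add_comm] at hgreen
  rw [← eq_neg_of_add_eq_zero_left hgreen]
  exact integral_mono (hgrad.integrable_norm_pow two_ne_zero) hsum
    fun v ↦ opNorm_sq_le_sum_apply_single _

end GroundState

section BracketDecay

open Module

variable {E F : Type*} [NormedAddCommGroup E] [MeasurableSpace E] {μ : Measure E}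
  [NormedAddCommGroup F] [NormedSpace ℝ F] {M : E → ℝ} {N : E → F}

/-- The coefficient of `M` in the projection of `N` onto the line spanned by `M`, orthogonal for
the weight `⟨v⟩⁻²`; the paper's `c_η`. -/
def projCoeff (M : E → ℝ) (N : E → F) (μ : Measure E) : F :=
  (∫ v, M v ^ 2 / (1 + ‖v‖ ^ 2) ∂μ)⁻¹ • ∫ v, (M v / (1 + ‖v‖ ^ 2)) • N v ∂μ

lemma sq_div_smul_inv_smul {a : ℝ} (ha : a ≠ 0) (b : ℝ) (z : F) :
    (a ^ 2 / b) • a⁻¹ • z = (a / b) • z := by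
  rw [smul_smul]
  congr 1
  field_simp

lemma weightedMean_sq_div_inv_smul (hM0 : ∀ v, M v ≠ 0) :
    weightedMean (fun v ↦ M v ^ 2 / (1 + ‖v‖ ^ 2)) (fun v ↦ (M v)⁻¹ • N v) μ =
      projCoeff M N μ := by
  simp_rw [weightedMean, projCoeff, sq_div_smul_inv_smul (hM0 _)]

lemma memLp_div_one_add_norm_sq [BorelSpace E] {p : ENNReal} (hM : MemLp M p μ) :
    MemLp (fun v ↦ M v / (1 + ‖v‖ ^ 2)) p μ := by
  refine hM.of_le
    (hM.1.aemeasurable.div (by fun_prop)).aestronglyMeasurable (.of_forall fun v ↦ ?_)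
  rw [norm_div]
  exact div_le_self (norm_nonneg _) ((le_abs_self _).trans' (by simp))

lemma integrable_div_smul [BorelSpace E] (hM : MemLp M 2 μ) (hN : MemLp N 2 μ) :
    Integrable (fun v ↦ (M v / (1 + ‖v‖ ^ 2)) • N v) μ :=
  memLp_one_iff_integrable.1 (hN.smul (memLp_div_one_add_norm_sq hM))

variable [NormedSpace ℝ E] [FiniteDimensional ℝ E] [BorelSpace E] [μ.IsAddHaarMeasure] {γ : ℝ}

lemma sq_sqrt_rpow_neg {x : ℝ} (hx : 0 ≤ x) (γ : ℝ) : (√x ^ (-γ)) ^ 2 = x ^ (-γ) := by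
  rw [← rpow_natCast, ← rpow_mul (sqrt_nonneg x), mul_comm, rpow_mul (sqrt_nonneg x),
    rpow_natCast, sq_sqrt hx]

lemma integrable_sqrt_rpow_mul_sq {s C : ℝ} (hs : finrank ℝ E < 2 * γ - s)
    (hM : AEStronglyMeasurable M μ) (hM_le : ∀ v, |M v| ≤ C * √(1 + ‖v‖ ^ 2) ^ (-γ)) :
    Integrable (fun v ↦ √(1 + ‖v‖ ^ 2) ^ s * M v ^ 2) μ := by
  have hsqrt (v : E) : 0 < √(1 + ‖v‖ ^ 2) := sqrt_pos.2 (by positivity)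
  have hcont : Continuous fun v : E ↦ √(1 + ‖v‖ ^ 2) ^ s :=
    Continuous.rpow_const (by fun_prop) fun v ↦ .inl (hsqrt v).ne'
  refine ((integrable_rpow_neg_one_add_norm_sq hs).const_mul (C ^ 2)).mono'
    (hcont.aestronglyMeasurable.mul (hM.pow 2)) (.of_forall fun v ↦ ?_)
  have hrpow : (1 + ‖v‖ ^ 2) ^ (-(2 * γ - s) / 2) = √(1 + ‖v‖ ^ 2) ^ (-(2 * γ - s)) := by
    rw [sqrt_eq_rpow, ← rpow_mul (by positivity)]
    congr 1
    ring
  rw [norm_of_nonneg (by positivity), hrpow, ← sq_abs (M v)]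
  calc √(1 + ‖v‖ ^ 2) ^ s * |M v| ^ 2
      ≤ √(1 + ‖v‖ ^ 2) ^ s * (C * √(1 + ‖v‖ ^ 2) ^ (-γ)) ^ 2 := by gcongr; exact hM_le v
    _ = C ^ 2 * √(1 + ‖v‖ ^ 2) ^ (-(2 * γ - s)) := by
        rw [mul_pow, ← rpow_mul_natCast (hsqrt v).le, mul_left_comm, ← rpow_add (hsqrt v)]
        congr 2
        push_cast
        ring

theorem exists_integral_norm_sub_smul_projCoeff_sq_le [CompleteSpace F]
    (hγ : finrank ℝ E < 2 * γ) (hM : ContDiff ℝ 1 M) {C₁ C₂ : ℝ} (hC₁ : 0 < C₁)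
    (hM_ge : ∀ v, C₁ * √(1 + ‖v‖ ^ 2) ^ (-γ) ≤ M v)
    (hM_le : ∀ v, M v ≤ C₂ * √(1 + ‖v‖ ^ 2) ^ (-γ)) :
    ∃ P : ℝ, 0 ≤ P ∧ ∀ N : E → F, ContDiff ℝ 1 N → MemLp N 2 μ →
      MemLp (groundStateGrad M N) 2 μ →
      Integrable (fun v ↦ ‖N v - M v • projCoeff M N μ‖ ^ 2 / (1 + ‖v‖ ^ 2)) μ ∧
      ∫ v, ‖N v - M v • projCoeff M N μ‖ ^ 2 / (1 + ‖v‖ ^ 2) ∂μ ≤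
        P * ∫ v, ‖groundStateGrad M N v‖ ^ 2 ∂μ := by
  have hMpos (v : E) : 0 < M v :=
    (mul_pos hC₁ (rpow_pos_of_pos (sqrt_pos.2 (by positivity)) _)).trans_le (hM_ge v)
  have hM0 (v : E) : M v ≠ 0 := (hMpos v).ne'
  have hM2 : MemLp M 2 μ := by
    refine (memLp_two_iff_integrable_sq hM.continuous.aestronglyMeasurable).2 ?_
    simpa using integrable_sqrt_rpow_mul_sq (s := 0) (by simpa using hγ)
      hM.continuous.aestronglyMeasurable fun v ↦ (abs_of_pos (hMpos v)).trans_le (hM_le v)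
  obtain ⟨P, hP, hbound⟩ := exists_integral_norm_sub_sq_le (F := F) (μ := μ) hγ
    (ρ := fun v ↦ M v ^ 2) (hM.continuous.pow 2).measurable (b := C₂ ^ 2) (pow_pos hC₁ 2)
    (fun v ↦ by
      rw [← sq_sqrt_rpow_neg (by positivity), ← mul_pow]
      exact pow_le_pow_left₀ (by positivity) (hM_ge v) 2)
    (fun v ↦ by
      rw [← sq_sqrt_rpow_neg (by positivity), ← mul_pow]
      exact pow_le_pow_left₀ (hMpos v).le (hM_le v) 2)
  refine ⟨P, hP, fun N hN hN2 hgrad ↦ ?_⟩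
  have hgrad_sq (v : E) : M v ^ 2 * ‖fderiv ℝ (fun w ↦ (M w)⁻¹ • N w) v‖ ^ 2 =
      ‖groundStateGrad M N v‖ ^ 2 := by
    rw [groundStateGrad, norm_smul, mul_pow, norm_eq_abs, sq_abs]
  have hdev (v : E) (c : F) : M v ^ 2 / (1 + ‖v‖ ^ 2) * ‖(M v)⁻¹ • N v - c‖ ^ 2 =
      ‖N v - M v • c‖ ^ 2 / (1 + ‖v‖ ^ 2) := by
    rw [div_mul_eq_mul_div, ← sq_abs, ← norm_eq_abs, ← mul_pow, ← norm_smul, smul_sub,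
      smul_inv_smul₀ (hM0 v)]
  have hNP := hbound (fun v ↦ (M v)⁻¹ • N v) (contDiff_inv_smul hM hM0 hN)
    (by simpa only [sq_div_smul_inv_smul (hM0 _)] using integrable_div_smul hM2 hN2)
    (by simpa only [hgrad_sq] using hgrad.integrable_norm_pow two_ne_zero)
  simpa only [hgrad_sq, hdev, weightedMean_sq_div_inv_smul hM0] using hNP

end BracketDecay

section EnergyEstimate

open scoped InnerProductSpace

section WeightedL2

variable {α F : Type*} [MeasurableSpace α] {μ : Measure α} [NormedAddCommGroup F] {V : α → ℝ}
  {f : α → F}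

lemma memLp_two_of_integrable_one_add_abs_mul (hf : AEStronglyMeasurable f μ)
    (hVf : Integrable (fun x ↦ (1 + |V x|) * ‖f x‖ ^ 2) μ) : MemLp f 2 μ := by
  refine (memLp_two_iff_integrable_sq_norm hf).2 (hVf.mono' (hf.norm.pow 2) (.of_forall fun x ↦ ?_))
  rw [norm_of_nonneg (sq_nonneg _)]
  exact le_mul_of_one_le_left (sq_nonneg _) (by simp)

lemma integrable_and_norm_integral_mul_smul_le [NormedSpace ℝ F] {g : α → ℝ}
    (hV : AEStronglyMeasurable V μ) (hg : AEStronglyMeasurable g μ)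
    (hf : AEStronglyMeasurable f μ) (hVg : Integrable (fun x ↦ (1 + |V x|) * g x ^ 2) μ)
    (hVf : Integrable (fun x ↦ (1 + |V x|) * ‖f x‖ ^ 2) μ) :
    Integrable (fun x ↦ (V x * g x) • f x) μ ∧ ‖∫ x, (V x * g x) • f x ∂μ‖ ≤
      ∫ x, (1 + |V x|) * g x ^ 2 ∂μ + ∫ x, (1 + |V x|) * ‖f x‖ ^ 2 ∂μ := by
  have young (x : α) : ‖(V x * g x) • f x‖ ≤
      (1 + |V x|) * g x ^ 2 + (1 + |V x|) * ‖f x‖ ^ 2 :=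
    calc ‖(V x * g x) • f x‖ = |V x| * (|g x| * ‖f x‖) := by
          rw [norm_smul, norm_mul, norm_eq_abs, norm_eq_abs, mul_assoc]
      _ ≤ (1 + |V x|) * (|g x| ^ 2 + ‖f x‖ ^ 2) := by
          gcongr
          · linarith
          · nlinarith [two_mul_le_add_sq |g x| ‖f x‖, abs_nonneg (g x), norm_nonneg (f x)]
      _ = (1 + |V x|) * g x ^ 2 + (1 + |V x|) * ‖f x‖ ^ 2 := by rw [sq_abs, mul_add]
  rw [← integral_add hVg hVf]
  exact ⟨(hVg.add hVf).mono' ((hV.mul hg).smul hf) (.of_forall young),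
    norm_integral_le_of_norm_le (hVg.add hVf) (.of_forall young)⟩

end WeightedL2

variable {d : ℕ} {F : Type*} [NormedAddCommGroup F] [InnerProductSpace ℝ F] [CompleteSpace F]
  {M V φ : EuclideanSpace ℝ (Fin d) → ℝ} {N : EuclideanSpace ℝ (Fin d) → F} {S : F →L[ℝ] F}
  {b u : F}

lemma norm_source_le (hM : ContDiff ℝ 2 M) (hM0 : ∀ v, M v ≠ 0) (hN : ContDiff ℝ 2 N)
    (hV : AEStronglyMeasurable V) (hVM : Integrable fun v ↦ (1 + |V v|) * M v ^ 2)
    (hVN : Integrable fun v ↦ (1 + |V v|) * ‖N v‖ ^ 2) (hgrad : MemLp (groundStateGrad M N) 2)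
    (hφ : MemLp φ 2) (hφM : ∫ v, M v * φ v = 1)
    (heq : ∀ v, schrodinger M N v = V v • S (N v) + φ v • b) :
    ‖b‖ ≤ ‖S‖ * ((∫ v, (1 + |V v|) * M v ^ 2) + ∫ v, (1 + |V v|) * ‖N v‖ ^ 2) := by
  have hM2 : MemLp M 2 := memLp_two_of_integrable_one_add_abs_mul (V := V)
    hM.continuous.aestronglyMeasurable (by simpa only [norm_eq_abs, sq_abs] using hVM)
  obtain ⟨hVMN, hVMN_le⟩ := integrable_and_norm_integral_mul_smul_le hV
    hM.continuous.aestronglyMeasurable hN.continuous.aestronglyMeasurable hVM hVN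
  have hMφ : Integrable fun v ↦ (M v * φ v) • b := (hM2.integrable_mul hφ).smul_const b
  have htest (v : EuclideanSpace ℝ (Fin d)) :
      M v • schrodinger M N v = S ((V v * M v) • N v) + (M v * φ v) • b := by
    rw [heq, smul_add, smul_smul, smul_smul, map_smul, mul_comm (V v)]
  have hzero : S (∫ v, (V v * M v) • N v) + b = 0 := by
    have hgreen := integral_smul_schrodinger_eq_zero hM hM0 hN hM2 hgrad
    simp_rw [htest] at hgreen
    rw [← hgreen ((S.integrable_comp hVMN).add hMφ), integral_add (S.integrable_comp hVMN) hMφ,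
      S.integral_comp_comm hVMN, integral_smul_const, hφM, one_smul]
  calc ‖b‖ = ‖S (∫ v, (V v * M v) • N v)‖ := by rw [eq_neg_of_add_eq_zero_right hzero, norm_neg]
    _ ≤ _ := S.le_opNorm_of_le hVMN_le

lemma integral_norm_groundStateGrad_sq_le_norm_mul (hM : ContDiff ℝ 2 M) (hM0 : ∀ v, M v ≠ 0)
    (hN : ContDiff ℝ 2 N) (hN2 : MemLp N 2) (hgrad : MemLp (groundStateGrad M N) 2)
    (hφ : MemLp φ 2) (hS : ∀ z, ⟪z, S z⟫_ℝ = 0)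
    (heq : ∀ v, schrodinger M N v = V v • S (N v) + φ v • b) :
    ∫ v, ‖groundStateGrad M N v‖ ^ 2 ≤ ‖∫ v, φ v • N v‖ * ‖b‖ := by
  have hφN : Integrable fun v ↦ φ v • N v := memLp_one_iff_integrable.1 (hN2.smul hφ)
  have htest (v : EuclideanSpace ℝ (Fin d)) :
      ⟪N v, schrodinger M N v⟫_ℝ = ⟪φ v • N v, b⟫_ℝ := by
    rw [heq, inner_add_right, real_inner_smul_right, hS, mul_zero, zero_add,
      real_inner_smul_right, real_inner_smul_left]
  calc ∫ v, ‖groundStateGrad M N v‖ ^ 2 ≤ -∫ v, ⟪N v, schrodinger M N v⟫_ℝ :=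
        integral_norm_groundStateGrad_sq_le hM hM0 hN hN2 hgrad
          (by simpa only [htest] using hφN.inner_const b)
    _ = -⟪∫ v, φ v • N v, b⟫_ℝ := by
        simp_rw [htest, real_inner_comm b]
        rw [integral_inner hφN]
    _ ≤ ‖∫ v, φ v • N v‖ * ‖b‖ := (neg_le_abs _).trans (abs_real_inner_le_norm _ _)

theorem integral_norm_groundStateGrad_sq_le_of_schrodinger_eq (hM : ContDiff ℝ 2 M)
    (hM0 : ∀ v, M v ≠ 0) (hN : ContDiff ℝ 2 N) (hV : AEStronglyMeasurable V)
    (hVM : Integrable fun v ↦ (1 + |V v|) * M v ^ 2)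
    (hVN : Integrable fun v ↦ (1 + |V v|) * ‖N v‖ ^ 2) (hgrad : MemLp (groundStateGrad M N) 2)
    (hφ : MemLp φ 2) (hφM : ∫ v, M v * φ v = 1) (hS : ∀ z, ⟪z, S z⟫_ℝ = 0)
    (hb : b = ∫ v, φ v • (N v - M v • u))
    (heq : ∀ v, schrodinger M N v = V v • S (N v) + φ v • b) {X : ℝ}
    (hX : (∫ v, (1 + |V v|) * M v ^ 2) + ∫ v, (1 + |V v|) * ‖N v‖ ^ 2 ≤ X) :
    ∫ v, ‖groundStateGrad M N v‖ ^ 2 ≤ (‖u‖ + ‖S‖ * X) * (‖S‖ * X) := by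
  have hM2 : MemLp M 2 := memLp_two_of_integrable_one_add_abs_mul (V := V)
    hM.continuous.aestronglyMeasurable (by simpa only [norm_eq_abs, sq_abs] using hVM)
  have hN2 := memLp_two_of_integrable_one_add_abs_mul hN.continuous.aestronglyMeasurable hVN
  have hφN : Integrable fun v ↦ φ v • N v := memLp_one_iff_integrable.1 (hN2.smul hφ)
  have hMφ : Integrable fun v ↦ (M v * φ v) • u := (hM2.integrable_mul hφ).smul_const u
  have hmean : ∫ v, φ v • N v = u + b := by
    simp_rw [hb, smul_sub, smul_smul, mul_comm (φ _)]
    rw [integral_sub hφN hMφ, integral_smul_const, hφM, one_smul, add_sub_cancel]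
  have hb_le : ‖b‖ ≤ ‖S‖ * X :=
    (norm_source_le hM hM0 hN hV hVM hVN hgrad hφ hφM heq).trans (by gcongr)
  calc ∫ v, ‖groundStateGrad M N v‖ ^ 2 ≤ ‖u + b‖ * ‖b‖ := by
        rw [← hmean]
        exact integral_norm_groundStateGrad_sq_le_norm_mul hM hM0 hN hN2 hgrad hφ hS heq
    _ ≤ (‖u‖ + ‖S‖ * X) * (‖S‖ * X) := by
        have := (norm_nonneg b).trans hb_le
        gcongr
        exact norm_add_le_of_le le_rfl hb_le

end EnergyEstimate

section PenalizedEquation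

variable {d : ℕ} {M V : EuclideanSpace ℝ (Fin d) → ℝ} {N : EuclideanSpace ℝ (Fin d) → ℂ}

lemma memLp_Phi {p : ENNReal} (hM : MemLp M p) : MemLp (Phi M) p :=
  (memLp_div_one_add_norm_sq hM).const_mul _

lemma integral_sq_div_one_add_norm_sq_pos (hM : Continuous M) (hM0 : ∀ v, M v ≠ 0)
    (hM2 : MemLp M 2) : 0 < ∫ v, M v ^ 2 / (1 + ‖v‖ ^ 2) := by
  have hint : Integrable fun v ↦ M v ^ 2 / (1 + ‖v‖ ^ 2) := by
    simpa only [smul_eq_mul, div_mul_eq_mul_div, ← sq] using integrable_div_smul hM2 hM2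
  refine integral_pos_of_integrable_nonneg_nonzero (x := 0) ?_ hint (fun v ↦ by positivity) ?_
  · exact (hM.pow 2).div (by fun_prop) fun v ↦ by positivity
  · have := hM0 0
    positivity

lemma integral_mul_Phi (hA : ∫ v, M v ^ 2 / (1 + ‖v‖ ^ 2) ≠ 0) : ∫ v, M v * Phi M v = 1 := by
  have hmul (v : EuclideanSpace ℝ (Fin d)) : M v * Phi M v =
      (∫ w, M w ^ 2 / (1 + ‖w‖ ^ 2))⁻¹ * (M v ^ 2 / (1 + ‖v‖ ^ 2)) := by
    rw [Phi]
    ring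
  simp_rw [hmul]
  rw [integral_const_mul, inv_mul_cancel₀ hA]

lemma norm_groundStateGrad_sq (M : EuclideanSpace ℝ (Fin d) → ℝ)
    (N : EuclideanSpace ℝ (Fin d) → ℂ) (v : EuclideanSpace ℝ (Fin d)) :
    ‖groundStateGrad M N v‖ ^ 2 = ‖fderiv ℝ (fun w ↦ N w / (M w : ℂ)) v‖ ^ 2 * M v ^ 2 := by
  have hquot : (fun w ↦ (M w)⁻¹ • N w) = fun w ↦ N w / (M w : ℂ) := by
    funext w
    rw [Complex.real_smul, Complex.ofReal_inv, inv_mul_eq_div]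
  rw [groundStateGrad, hquot, norm_smul, mul_pow, norm_eq_abs, sq_abs, mul_comm]

lemma smul_projCoeff_eq (M : EuclideanSpace ℝ (Fin d) → ℝ) (N : EuclideanSpace ℝ (Fin d) → ℂ)
    (v : EuclideanSpace ℝ (Fin d)) :
    M v • projCoeff M N volume = (((∫ w, M w ^ 2 / (1 + ‖w‖ ^ 2))⁻¹ : ℝ) : ℂ) *
      (∫ w, N w * ((M w / (1 + ‖w‖ ^ 2) : ℝ) : ℂ)) * (M v : ℂ) := by
  simp_rw [projCoeff, Complex.real_smul, mul_comm (N _)]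
  exact mul_comm _ _

lemma real_inner_I_mul_ofReal_mul_self (η : ℝ) (z : ℂ) :
    inner ℝ z (Complex.I * η * z) = 0 := by
  simp [Complex.inner]
  ring

lemma schrodinger_eq_of_penalized {η x : ℝ} {v : EuclideanSpace ℝ (Fin d)}
    (heq : -(lap N v) + ((lap M v / M v : ℝ) : ℂ) * N v + Complex.I * (η : ℂ) * (x : ℂ) * N v =
      -(∫ w, (N w - (M w : ℂ)) * ((Phi M w : ℝ) : ℂ)) * ((Phi M v : ℝ) : ℂ)) :
    schrodinger M N v = x • (Complex.I * η * N v) +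
      Phi M v • ∫ w, Phi M w • (N w - M w • (1 : ℂ)) := by
  simp_rw [schrodinger, Complex.real_smul, mul_one, mul_comm (Phi M _ : ℂ)]
  linear_combination -heq

lemma integrable_one_add_abs_apply_mul_sq {γ C : ℝ} (hγ : d + 1 < 2 * γ) (hM : Continuous M)
    (hM_le : ∀ v, |M v| ≤ C * √(1 + ‖v‖ ^ 2) ^ (-γ)) (i : Fin d) :
    Integrable fun v : EuclideanSpace ℝ (Fin d) ↦ (1 + |v i|) * M v ^ 2 := by
  have hdecay := integrable_sqrt_rpow_mul_sq (s := 1) (μ := volume)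
    (by rw [finrank_euclideanSpace_fin]; linarith) hM.aestronglyMeasurable hM_le
  refine (hdecay.const_mul 2).mono' (by fun_prop) (.of_forall fun v ↦ ?_)
  have hone : 1 ≤ √(1 + ‖v‖ ^ 2) := one_le_sqrt.2 (by simp)
  have happly : |v i| ≤ √(1 + ‖v‖ ^ 2) :=
    (PiLp.norm_apply_le v i).trans (le_sqrt_of_sq_le (by simp))
  rw [norm_of_nonneg (by positivity), rpow_one, ← mul_assoc]
  gcongr
  linarith

lemma one_add_mul_mul_le_of_nonneg {η : ℝ} (hη : 0 ≤ η) (B K : ℝ) :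
    (1 + η * (B + K)) * (η * (B + K)) ≤ (4 + 4 * B ^ 2) * (1 + K ^ 2) * (η * (1 + η)) := by
  have hlin : B + K ≤ (2 + 2 * B ^ 2) * (1 + K ^ 2) := by
    nlinarith [sq_nonneg (B - 1), sq_nonneg (K - 1), sq_nonneg (B * K)]
  have hquad : (B + K) ^ 2 ≤ (2 + 2 * B ^ 2) * (1 + K ^ 2) := by
    nlinarith [sq_nonneg (B - K), sq_nonneg (B * K)]
  calc (1 + η * (B + K)) * (η * (B + K)) = η * (B + K) + η ^ 2 * (B + K) ^ 2 := by ring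
    _ ≤ η * ((2 + 2 * B ^ 2) * (1 + K ^ 2)) + η ^ 2 * ((2 + 2 * B ^ 2) * (1 + K ^ 2)) := by
        gcongr
    _ = (2 + 2 * B ^ 2) * (1 + K ^ 2) * (η * (1 + η)) := by ring
    _ ≤ (4 + 4 * B ^ 2) * (1 + K ^ 2) * (η * (1 + η)) := by gcongr <;> norm_num

lemma integral_norm_groundStateGrad_sq_le_of_penalized (hM : ContDiff ℝ 2 M)
    (hM0 : ∀ v, M v ≠ 0) (hN : ContDiff ℝ 2 N) (hV : AEStronglyMeasurable V)
    (hVM : Integrable fun v ↦ (1 + |V v|) * M v ^ 2)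
    (hVN : Integrable fun v ↦ (1 + |V v|) * ‖N v‖ ^ 2) (hgrad : MemLp (groundStateGrad M N) 2)
    {η X : ℝ} (hX : (∫ v, (1 + |V v|) * M v ^ 2) + ∫ v, (1 + |V v|) * ‖N v‖ ^ 2 ≤ X)
    (heq : ∀ v, -(lap N v) + ((lap M v / M v : ℝ) : ℂ) * N v
        + Complex.I * (η : ℂ) * (V v : ℂ) * N v =
      -(∫ w, (N w - (M w : ℂ)) * ((Phi M w : ℝ) : ℂ)) * ((Phi M v : ℝ) : ℂ)) :
    ∫ v, ‖groundStateGrad M N v‖ ^ 2 ≤ (1 + |η| * X) * (|η| * X) := by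
  have hM2 : MemLp M 2 := memLp_two_of_integrable_one_add_abs_mul (V := V)
    hM.continuous.aestronglyMeasurable (by simpa only [norm_eq_abs, sq_abs] using hVM)
  have hA := integral_sq_div_one_add_norm_sq_pos hM.continuous hM0 hM2
  have hnorm : ‖ContinuousLinearMap.mul ℝ ℂ (Complex.I * η)‖ = |η| := by simp
  simpa only [hnorm, norm_one] using
    integral_norm_groundStateGrad_sq_le_of_schrodinger_eq hM hM0 hN hV hVM hVN hgrad
      (S := .mul ℝ ℂ (Complex.I * η)) (u := 1) (memLp_Phi hM2) (integral_mul_Phi hA.ne')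
      (real_inner_I_mul_ofReal_mul_self η) rfl (fun v ↦ schrodinger_eq_of_penalized (heq v)) hX

theorem small_velocities_general {γ C₁ C₂ : ℝ} (hγ : d < 2 * γ) (hC₁ : 0 < C₁)
    (hM : ContDiff ℝ 2 M) (hM_ge : ∀ v, C₁ * √(1 + ‖v‖ ^ 2) ^ (-γ) ≤ M v)
    (hM_le : ∀ v, M v ≤ C₂ * √(1 + ‖v‖ ^ 2) ^ (-γ)) (hV : AEStronglyMeasurable V)
    (hVM : Integrable fun v ↦ (1 + |V v|) * M v ^ 2) :
    ∃ C : ℝ, 0 < C ∧ ∀ (η K : ℝ) (N : EuclideanSpace ℝ (Fin d) → ℂ), ContDiff ℝ 2 N →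
      (Integrable fun v ↦ ‖fderiv ℝ (fun w ↦ N w / (M w : ℂ)) v‖ ^ 2 * M v ^ 2) →
      (Integrable fun v ↦ (1 + |V v|) * ‖N v‖ ^ 2) →
      ∫ v, (1 + |V v|) * ‖N v‖ ^ 2 ≤ K →
      (∀ v, -(lap N v) + ((lap M v / M v : ℝ) : ℂ) * N v
          + Complex.I * (η : ℂ) * (V v : ℂ) * N v =
        -(∫ w, (N w - (M w : ℂ)) * ((Phi M w : ℝ) : ℂ)) * ((Phi M v : ℝ) : ℂ)) →
      (Integrable fun v ↦ ‖N v - M v • projCoeff M N volume‖ ^ 2 / (1 + ‖v‖ ^ 2)) ∧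
      ∫ v, ‖N v - M v • projCoeff M N volume‖ ^ 2 / (1 + ‖v‖ ^ 2) ≤
        C * (1 + K ^ 2) * (|η| * (1 + |η|)) := by
  have hM0 (v : EuclideanSpace ℝ (Fin d)) : M v ≠ 0 :=
    ((mul_pos hC₁ (rpow_pos_of_pos (sqrt_pos.2 (by positivity)) _)).trans_le (hM_ge v)).ne'
  obtain ⟨P, hP, hpoincare⟩ := exists_integral_norm_sub_smul_projCoeff_sq_le (F := ℂ)
    (μ := volume) (by rwa [finrank_euclideanSpace_fin]) (hM.of_le one_le_two) hC₁ hM_ge hM_le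
  set B := ∫ v, (1 + |V v|) * M v ^ 2
  refine ⟨(P + 1) * (4 + 4 * B ^ 2), by positivity, fun η K N hN hgrad hVN hK heq ↦ ?_⟩
  replace hgrad : MemLp (groundStateGrad M N) 2 := by
    refine (memLp_two_iff_integrable_sq_norm (continuous_groundStateGrad (hM.of_le one_le_two)
      hM0 (hN.of_le one_le_two)).aestronglyMeasurable).2 ?_
    simpa only [norm_groundStateGrad_sq] using hgrad
  have hN2 := memLp_two_of_integrable_one_add_abs_mul hN.continuous.aestronglyMeasurable hVN
  refine (hpoincare N (hN.of_le one_le_two) hN2 hgrad).imp_right fun hle ↦ hle.trans ?_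
  calc P * ∫ v, ‖groundStateGrad M N v‖ ^ 2
      ≤ (P + 1) * ((1 + |η| * (B + K)) * (|η| * (B + K))) := by
        gcongr
        · simp
        · exact integral_norm_groundStateGrad_sq_le_of_penalized hM hM0 hN hV hVM hVN hgrad
            (by gcongr) heq
    _ ≤ (P + 1) * ((4 + 4 * B ^ 2) * (1 + K ^ 2) * (|η| * (1 + |η|))) := by
        gcongr (P + 1) * ?_
        exact one_add_mul_mul_le_of_nonneg (abs_nonneg η) B K
    _ = (P + 1) * (4 + 4 * B ^ 2) * (1 + K ^ 2) * (|η| * (1 + |η|)) := by ring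

end PenalizedEquation

/-- **Small velocities do not contribute** (item 1 of Lemma 3.5 of the paper): for
`γ ∈ ((d+1)/2,(d+4)/2)` and `N` a solution of the penalized equation with `λ = 0`,
`∫_{|v₁|≤R} |N − c_η M|² ⟨v⟩⁻² ≤ C(1+K²) η`. -/
theorem small_velocities (d : ℕ) (h0 : 0 < d) (γ C₁ C₂ : ℝ)
    (hγ₁ : ((d : ℝ) + 1) / 2 < γ) (hγ₂ : γ < ((d : ℝ) + 4) / 2)
    (hC₁ : 0 < C₁) (hC₁₂ : C₁ ≤ C₂)
    (M : EuclideanSpace ℝ (Fin d) → ℝ) (hMpos : ∀ v, 0 < M v) (hM : ContDiff ℝ 2 M)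
    (hA1 : ∀ v, C₁ * Real.sqrt (1 + ‖v‖ ^ 2) ^ (-γ) ≤ M v ∧
              M v ≤ C₂ * Real.sqrt (1 + ‖v‖ ^ 2) ^ (-γ))
    (hA2 : Integrable (fun v =>
        (1 + ‖v‖ ^ 2) * ‖fderiv ℝ (fun w => M w / (1 + ‖w‖ ^ 2)) v‖ ^ 2)) :
    ∃ η₀ C : ℝ, 0 < η₀ ∧ 0 < C ∧
      ∀ η : ℝ, 0 < η → η ≤ η₀ → ∀ R : ℝ, 0 < R → ∀ K : ℝ,
        ∀ N : EuclideanSpace ℝ (Fin d) → ℂ, ContDiff ℝ 2 N →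
          Integrable (fun v => ‖N v‖ ^ 2) →
          Integrable (fun v => ‖fderiv ℝ (fun w => N w / (M w : ℂ)) v‖ ^ 2 * (M v) ^ 2) →
          Integrable (fun v => (1 + |v (⟨0, h0⟩ : Fin d)|) * ‖N v‖ ^ 2) →
          (∫ v, (1 + |v (⟨0, h0⟩ : Fin d)|) * ‖N v‖ ^ 2) ≤ K →
          (∀ v, -(lap N v) + ((lap M v / M v : ℝ) : ℂ) * N v
              + Complex.I * (η : ℂ) * ((v (⟨0, h0⟩ : Fin d) : ℝ) : ℂ) * N v =
            -(∫ w, (N w - (M w : ℂ)) * ((Phi M w : ℝ) : ℂ)) * ((Phi M v : ℝ) : ℂ)) →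
          (∫ v in {v : EuclideanSpace ℝ (Fin d) | |v (⟨0, h0⟩ : Fin d)| ≤ R},
              ‖N v - (((∫ w, (M w) ^ 2 / (1 + ‖w‖ ^ 2) : ℝ)⁻¹ : ℝ) : ℂ) *
                (∫ w, N w * ((M w / (1 + ‖w‖ ^ 2) : ℝ) : ℂ)) * (M v : ℂ)‖ ^ 2 /
              (1 + ‖v‖ ^ 2)) ≤ C * (1 + K ^ 2) * η := by
  have hM_le (v : EuclideanSpace ℝ (Fin d)) : |M v| ≤ C₂ * √(1 + ‖v‖ ^ 2) ^ (-γ) :=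
    (abs_of_pos (hMpos v)).trans_le (hA1 v).2
  obtain ⟨C, hC, hbound⟩ := small_velocities_general (by linarith) hC₁ hM (fun v ↦ (hA1 v).1)
    (fun v ↦ (hA1 v).2) (V := fun v ↦ v ⟨0, h0⟩) (by fun_prop)
    (integrable_one_add_abs_apply_mul_sq (by linarith) hM.continuous hM_le _)
  refine ⟨1, C * 2, one_pos, by positivity, fun η hη hη1 R _ K N hN _ hgrad hVN hK heq ↦ ?_⟩
  obtain ⟨hint, hle⟩ := hbound η K N hN hgrad hVN hK heq
  simp_rw [← smul_projCoeff_eq]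
  calc _ ≤ ∫ v, ‖N v - M v • projCoeff M N volume‖ ^ 2 / (1 + ‖v‖ ^ 2) :=
        setIntegral_le_integral hint (.of_forall fun v ↦ by positivity)
    _ ≤ C * (1 + K ^ 2) * (|η| * (1 + |η|)) := hle
    _ ≤ C * (1 + K ^ 2) * (η * 2) := by
        rw [abs_of_pos hη]
        gcongr
        linarith
    _ = C * 2 * (1 + K ^ 2) * η := by ring
end
end

section
/- Assume 2γ = d+1, let M : ℝ^d → ℝ be continuous with C₁⟨v⟩^{−γ} ≤ M(v) ≤ C₂⟨v⟩^{−γ} for all v, and let m : ℝ^d∖{0} → ℝ be such that for every s ≠ 0, λ^{−γ} M(λ^{−1}s) → m(s) as λ → 0⁺. Then lim_{R → ∞} (1/ln R) ∫_{\{|v| ≤ R\}} v M(v)² dv = ∫_{S^{d−1}} s m(s)² dσ(s), where dσ is the surface measure on the unit sphere S^{d−1} ⊂ ℝ^d and both integrals are ℝ^d-valued. Equivalently, lim_{ε → 0⁺} (3/|ln ε|) ∫_{\{|v| ≤ ε^{−1/3}\}} v M(v)² dv equals the same sphere integral. -/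
/-!
If `f` decays like `‖x‖ ^ (-n)` in dimension `n`, the Jacobian `r ^ (n - 1)` of polar coordinates
leaves a radial density asymptotic to `r⁻¹ • ∫ s, g s`, where `g s` is the limit of
`r ^ n • f (r • s)`. Since `∫ r in 1..R, r⁻¹ = log R` diverges, replacing the density by its
asymptotic equivalent changes its integral only by `o(log R)`. At `2 * γ = n + 1` the field
`M v ^ 2 • v` has exactly this decay.
-/

open MeasureTheory Real Filter

noncomputable section

open Set Metric Module
open scoped Topology

section LogarithmicMean

variable {F : Type*} [NormedAddCommGroup F] [NormedSpace ℝ F]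

theorem isLittleO_intervalIntegral_atTop {f : ℝ → F} {g : ℝ → ℝ} {a : ℝ}
    (hf : ∀ R, a ≤ R → IntervalIntegrable f volume a R)
    (hg : ∀ R, a ≤ R → IntervalIntegrable g volume a R)
    (hfg : f =o[atTop] g) (hg_nonneg : 0 ≤ᶠ[atTop] g)
    (hg_top : Tendsto (fun R => ∫ r in a..R, g r) atTop atTop) :
    (fun R => ∫ r in a..R, f r) =o[atTop] fun R => ∫ r in a..R, g r := by
  refine Asymptotics.isLittleO_iff.2 fun ε hε => ?_
  have hfg_le : ∀ᶠ r in atTop, ‖f r‖ ≤ ε / 2 * g r := by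
    filter_upwards [Asymptotics.isLittleO_iff.1 hfg (half_pos hε), hg_nonneg] with r hr hgr
    rwa [Real.norm_of_nonneg hgr] at hr
  obtain ⟨b, hb⟩ := eventually_atTop.1 (hfg_le.and (eventually_ge_atTop a))
  have hab : a ≤ b := (hb b le_rfl).2
  have head_le : ∀ᶠ R in atTop,
      ‖∫ r in a..b, f r‖ - ε / 2 * ∫ r in a..b, g r ≤ ε / 2 * ∫ r in a..R, g r :=
    (hg_top.const_mul_atTop (half_pos hε)).eventually_ge_atTop _
  filter_upwards [head_le, eventually_ge_atTop b] with R hhead hbR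
  have hf_bR := (hf b hab).symm.trans (hf R (hab.trans hbR))
  have hg_bR := (hg b hab).symm.trans (hg R (hab.trans hbR))
  have tail_le : ‖∫ r in b..R, f r‖ ≤ ε / 2 * ∫ r in b..R, g r := by
    rw [← intervalIntegral.integral_const_mul]
    exact intervalIntegral.norm_integral_le_of_norm_le hbR
      (ae_of_all _ fun r hr => (hb r hr.1.le).1) (hg_bR.const_mul _)
  have hg_split := intervalIntegral.integral_add_adjacent_intervals (hg b hab) hg_bR
  calc ‖∫ r in a..R, f r‖
      = ‖(∫ r in a..b, f r) + ∫ r in b..R, f r‖ := by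
        rw [intervalIntegral.integral_add_adjacent_intervals (hf b hab) hf_bR]
    _ ≤ ‖∫ r in a..b, f r‖ + ε / 2 * ∫ r in b..R, g r := norm_add_le_of_le le_rfl tail_le
    _ ≤ ε * ∫ r in a..R, g r := by rw [← hg_split] at hhead ⊢; linarith
    _ ≤ ε * ‖∫ r in a..R, g r‖ := by gcongr; exact le_norm_self _

theorem tendsto_inv_log_smul_intervalIntegral [CompleteSpace F] {h : ℝ → F} {L : F}
    (hh : ∀ R, 1 ≤ R → IntervalIntegrable h volume 1 R)
    (hL : Tendsto (fun r => r • h r) atTop (𝓝 L)) :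
    Tendsto (fun R => (log R)⁻¹ • ∫ r in (1 : ℝ)..R, h r) atTop (𝓝 L) := by
  have hinv (R : ℝ) (hR : 1 ≤ R) : IntervalIntegrable (fun r : ℝ => r⁻¹) volume 1 R :=
    intervalIntegral.intervalIntegrable_inv
      (fun r hr => (one_pos.trans_le (uIcc_of_le hR ▸ hr).1).ne') continuousOn_id
  have hinv_smul (R : ℝ) (hR : 1 ≤ R) : IntervalIntegrable (fun r : ℝ => r⁻¹ • L) volume 1 R :=
    ⟨(hinv R hR).1.smul_const L, (hinv R hR).2.smul_const L⟩
  have integral_inv_eq : (fun R => ∫ r in (1 : ℝ)..R, r⁻¹) =ᶠ[atTop] log := by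
    filter_upwards [eventually_gt_atTop 0] with R hR
    rw [integral_inv_of_pos one_pos hR, div_one]
  have remainder : (fun r => h r - r⁻¹ • L) =o[atTop] fun r : ℝ => r⁻¹ := by
    have hL_sub : (fun r => r • h r - L) =o[atTop] fun _ => (1 : ℝ) :=
      (Asymptotics.isLittleO_one_iff ℝ).2 (tendsto_sub_nhds_zero_iff.2 hL)
    refine ((Asymptotics.isBigO_refl (fun r : ℝ => r⁻¹) atTop).smul_isLittleO hL_sub).congr' ?_ ?_
    · filter_upwards [eventually_ne_atTop 0] with r hr
      rw [smul_sub, inv_smul_smul₀ hr]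
    · exact .of_forall fun r => mul_one r⁻¹
  have integral_remainder := isLittleO_intervalIntegral_atTop
    (fun R hR => (hh R hR).sub (hinv_smul R hR)) hinv remainder
    ((eventually_ge_atTop 0).mono fun r hr => inv_nonneg.2 hr)
    (tendsto_log_atTop.congr' integral_inv_eq.symm)
  refine tendsto_sub_nhds_zero_iff.1 <|
    (integral_remainder.congr' .rfl integral_inv_eq).tendsto_inv_smul_nhds_zero.congr' ?_
  filter_upwards [eventually_gt_atTop 1, integral_inv_eq] with R hR hR_inv
  rw [intervalIntegral.integral_sub (hh R hR.le) (hinv_smul R hR.le),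
    intervalIntegral.integral_smul_const, hR_inv, smul_sub, inv_smul_smul₀ (log_pos hR).ne']

end LogarithmicMean

section Polar

theorem homeomorphUnitSphereProd_snd_smul_fst {E : Type*} [NormedAddCommGroup E] [NormedSpace ℝ E]
    (x : ({0}ᶜ : Set E)) :
    (homeomorphUnitSphereProd E x).2.1 • (homeomorphUnitSphereProd E x).1.1 = (x : E) := by
  rw [← homeomorphUnitSphereProd_symm_apply_coe, Homeomorph.symm_apply_apply]

variable {E F : Type*} [NormedAddCommGroup E] [NormedSpace ℝ E] [MeasurableSpace E]
  [NormedAddCommGroup F] [NormedSpace ℝ F]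

/-- The integral of `f` over the sphere of radius `r` about the origin, taken in the angular
variable: `s` ranges over the unit sphere, so the Jacobian `r ^ (n - 1)` is not included. -/
def sphereIntegral (μ : Measure E) (f : E → F) (r : ℝ) : F :=
  ∫ s : sphere (0 : E) 1, f (r • (s : E)) ∂μ.toSphere

theorem eqOn_pow_smul_sphereIntegral_indicator_closedBall (μ : Measure E) (f : E → F) (n : ℕ)
    (R : ℝ) :
    EqOn (fun r => r ^ n • sphereIntegral μ ((closedBall 0 R).indicator f) r)
      ((Iic R).indicator fun r => r ^ n • sphereIntegral μ f r) (Ioi 0) := by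
  intro r hr
  have mem_iff (s : sphere (0 : E) 1) : r • (s : E) ∈ closedBall 0 R ↔ r ∈ Iic R := by
    simp [norm_smul, abs_of_pos (mem_Ioi.1 hr)]
  by_cases hrR : r ∈ Iic R <;> simp [sphereIntegral, indicator, mem_iff, hrR]

theorem integral_volumeIoiPow (n : ℕ) (φ : ℝ → F) :
    ∫ r : Ioi (0 : ℝ), φ r ∂(Measure.volumeIoiPow n) = ∫ r in Ioi (0 : ℝ), r ^ n • φ r := by
  rw [Measure.volumeIoiPow, integral_withDensity_eq_integral_toReal_smul (by fun_prop) (by simp),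
    ← integral_subtype_comap measurableSet_Ioi]
  refine integral_congr_ae (ae_of_all _ fun r => ?_)
  simp only [ENNReal.toReal_ofReal (pow_nonneg (le_of_lt r.2) n)]

theorem integrable_volumeIoiPow_iff (n : ℕ) (φ : ℝ → F) :
    Integrable (fun r : Ioi (0 : ℝ) => φ r) (Measure.volumeIoiPow n) ↔
      IntegrableOn (fun r => r ^ n • φ r) (Ioi 0) := by
  rw [Measure.volumeIoiPow, integrable_withDensity_iff_integrable_smul' (by fun_prop) (by simp),
    integrableOn_iff_comap_subtypeVal measurableSet_Ioi]
  refine integrable_congr (ae_of_all _ fun r => ?_)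
  simp only [Function.comp, ENNReal.toReal_ofReal (pow_nonneg (le_of_lt r.2) n)]

variable [BorelSpace E] [FiniteDimensional ℝ E] (μ : Measure E) [μ.IsAddHaarMeasure]

theorem integrable_sphere_prod_volumeIoiPow {G : Type*} [NormedAddCommGroup G] {f : E → G}
    (hf : Integrable f μ) :
    Integrable (fun p : sphere (0 : E) 1 × Ioi (0 : ℝ) => f (p.2.1 • p.1.1))
      (μ.toSphere.prod (.volumeIoiPow (finrank ℝ E - 1))) := by
  rw [← μ.measurePreserving_homeomorphUnitSphereProd.integrable_comp_emb
    (Homeomorph.measurableEmbedding _)]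
  simpa only [Function.comp_def, homeomorphUnitSphereProd_snd_smul_fst] using
    (integrableOn_iff_comap_subtypeVal (measurableSet_singleton _).compl).1 hf.integrableOn

theorem integral_sphere_prod_volumeIoiPow [Nontrivial E] (f : E → F) :
    ∫ p : sphere (0 : E) 1 × Ioi (0 : ℝ), f (p.2.1 • p.1.1)
      ∂(μ.toSphere.prod (.volumeIoiPow (finrank ℝ E - 1))) = ∫ x, f x ∂μ := by
  rw [← μ.measurePreserving_homeomorphUnitSphereProd.integral_comp
    (Homeomorph.measurableEmbedding _)]
  simp only [homeomorphUnitSphereProd_snd_smul_fst]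
  rw [integral_subtype_comap (measurableSet_singleton _).compl f, restrict_compl_singleton]

variable {f : E → F}

theorem integrableOn_pow_smul_sphereIntegral (hf : Integrable f μ) :
    IntegrableOn (fun r => r ^ (finrank ℝ E - 1) • sphereIntegral μ f r) (Ioi 0) :=
  (integrable_volumeIoiPow_iff _ _).1 (integrable_sphere_prod_volumeIoiPow μ hf).integral_prod_right

theorem integral_eq_integral_pow_smul_sphereIntegral [Nontrivial E] (hf : Integrable f μ) :
    ∫ x, f x ∂μ = ∫ r in Ioi (0 : ℝ), r ^ (finrank ℝ E - 1) • sphereIntegral μ f r := by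
  rw [← integral_sphere_prod_volumeIoiPow,
    integral_prod_symm _ (integrable_sphere_prod_volumeIoiPow μ hf)]
  exact integral_volumeIoiPow _ (sphereIntegral μ f)

theorem intervalIntegrable_pow_smul_sphereIntegral {R : ℝ} (hR : 0 ≤ R)
    (hf : IntegrableOn f (closedBall 0 R) μ) :
    IntervalIntegrable (fun r => r ^ (finrank ℝ E - 1) • sphereIntegral μ f r) volume 0 R := by
  have integrableOn_indicator := (integrableOn_congr_fun
    (eqOn_pow_smul_sphereIntegral_indicator_closedBall μ f _ R) measurableSet_Ioi).1
    (integrableOn_pow_smul_sphereIntegral μ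
      ((integrable_indicator_iff measurableSet_closedBall).2 hf))
  rwa [intervalIntegrable_iff_integrableOn_Ioc_of_le hR, ← Iic_inter_Ioi, IntegrableOn,
    ← Measure.restrict_restrict measurableSet_Iic, ← IntegrableOn,
    ← integrable_indicator_iff measurableSet_Iic]

theorem setIntegral_closedBall_eq_intervalIntegral [Nontrivial E] {R : ℝ} (hR : 0 ≤ R)
    (hf : IntegrableOn f (closedBall 0 R) μ) :
    ∫ x in closedBall 0 R, f x ∂μ =
      ∫ r in (0 : ℝ)..R, r ^ (finrank ℝ E - 1) • sphereIntegral μ f r := by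
  rw [← integral_indicator measurableSet_closedBall,
    integral_eq_integral_pow_smul_sphereIntegral μ
      ((integrable_indicator_iff measurableSet_closedBall).2 hf),
    setIntegral_congr_fun measurableSet_Ioi
      (eqOn_pow_smul_sphereIntegral_indicator_closedBall μ f _ R),
    setIntegral_indicator measurableSet_Iic, Ioi_inter_Iic, intervalIntegral.integral_of_le hR]

theorem tendsto_inv_log_smul_setIntegral_closedBall [Nontrivial E] [CompleteSpace F]
    {g : sphere (0 : E) 1 → F} {C : ℝ} (hf : StronglyMeasurable f) (hf_loc : LocallyIntegrable f μ)
    (hbound : ∀ᶠ r : ℝ in atTop, ∀ᵐ s : sphere (0 : E) 1 ∂μ.toSphere,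
      ‖r ^ finrank ℝ E • f (r • (s : E))‖ ≤ C)
    (hlim : ∀ᵐ s : sphere (0 : E) 1 ∂μ.toSphere,
      Tendsto (fun r : ℝ => r ^ finrank ℝ E • f (r • (s : E))) atTop (𝓝 (g s))) :
    Tendsto (fun R : ℝ => (log R)⁻¹ • ∫ x in closedBall 0 R, f x ∂μ) atTop
      (𝓝 (∫ s, g s ∂μ.toSphere)) := by
  let h (r : ℝ) : F := r ^ (finrank ℝ E - 1) • sphereIntegral μ f r
  have hf_ball (R : ℝ) : IntegrableOn f (closedBall 0 R) μ :=
    hf_loc.integrableOn_isCompact (isCompact_closedBall 0 R)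
  have hh (R : ℝ) (hR : 0 ≤ R) : IntervalIntegrable h volume 0 R :=
    intervalIntegrable_pow_smul_sphereIntegral μ hR (hf_ball R)
  have hh_lim : Tendsto (fun r => r • h r) atTop (𝓝 (∫ s, g s ∂μ.toSphere)) := by
    have smul_h_eq (r : ℝ) :
        r • h r = ∫ s : sphere (0 : E) 1, r ^ finrank ℝ E • f (r • (s : E)) ∂μ.toSphere := by
      rw [smul_smul, mul_pow_sub_one finrank_pos.ne', sphereIntegral, integral_smul]
    simp only [smul_h_eq]
    refine tendsto_integral_filter_of_dominated_convergence (fun _ => C)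
      (.of_forall fun r => ?_) hbound (integrable_const C) hlim
    exact ((hf.comp_measurable (by fun_prop)).const_smul _).aestronglyMeasurable
  have head : Tendsto (fun R => (log R)⁻¹ • ∫ r in (0 : ℝ)..1, h r) atTop (𝓝 0) := by
    simpa using tendsto_log_atTop.inv_tendsto_atTop.smul_const (∫ r in (0 : ℝ)..1, h r)
  have hh_tail (R : ℝ) (hR : 0 ≤ R) : IntervalIntegrable h volume 1 R :=
    (hh 1 zero_le_one).symm.trans (hh R hR)
  have tail := tendsto_inv_log_smul_intervalIntegral
    (fun R hR => hh_tail R (zero_le_one.trans hR)) hh_lim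
  rw [← zero_add (∫ s, g s ∂μ.toSphere)]
  refine (head.add tail).congr' ?_
  filter_upwards [eventually_ge_atTop 0] with R hR
  rw [← smul_add,
    intervalIntegral.integral_add_adjacent_intervals (hh 1 zero_le_one) (hh_tail R hR),
    setIntegral_closedBall_eq_intervalIntegral μ hR (hf_ball R)]

end Polar

theorem tendsto_div_abs_log_smul_comp_rpow {F : Type*} [NormedAddCommGroup F] [NormedSpace ℝ F]
    {Φ : ℝ → F} {L : F} {p : ℝ} (hp : 0 < p)
    (hΦ : Tendsto (fun R => (log R)⁻¹ • Φ R) atTop (𝓝 L)) :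
    Tendsto (fun ε : ℝ => (p / |log ε|) • Φ (ε ^ (-1 / p))) (𝓝[>] 0) (𝓝 L) := by
  have hpow : Tendsto (fun ε : ℝ => ε ^ (-1 / p)) (𝓝[>] 0) atTop :=
    tendsto_rpow_neg_nhdsGT_zero (div_neg_of_neg_of_pos neg_one_lt_zero hp)
  refine (hΦ.comp hpow).congr' ?_
  filter_upwards [Ioo_mem_nhdsGT one_pos] with ε ⟨hε₀, hε₁⟩
  have hlog : log ε < 0 := log_neg hε₀ hε₁
  rw [Function.comp, log_rpow hε₀, abs_of_neg hlog]
  congr 1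
  field_simp

section Drift

theorem rpow_mul_sqrt_one_add_sq_rpow_neg_le_one {r γ : ℝ} (hr : 0 ≤ r) (hγ : 0 ≤ γ) :
    r ^ γ * √(1 + r ^ 2) ^ (-γ) ≤ 1 := by
  have hr_le : r ≤ √(1 + r ^ 2) := Real.le_sqrt_of_sq_le (by linarith)
  rw [rpow_neg (by positivity), ← div_eq_mul_inv]
  exact div_le_one_of_le₀ (by gcongr) (by positivity)

theorem pow_smul_sq_smul_smul {E : Type*} [AddCommGroup E] [Module ℝ E] {n : ℕ} {γ r : ℝ}
    (hγ : 2 * γ = n + 1) (hr : 0 ≤ r) (a : ℝ) (s : E) :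
    r ^ n • a ^ 2 • r • s = (r ^ γ * a) ^ 2 • s := by
  have rpow_sq : (r ^ γ) ^ 2 = r ^ (n + 1) := by
    rw [← rpow_mul_natCast hr, ← rpow_natCast]
    congr 1
    push_cast
    linarith
  rw [smul_smul, smul_smul, mul_pow, rpow_sq]
  congr 1
  ring

theorem tendsto_rpow_mul_apply_smul_atTop {E : Type*} [AddCommGroup E] [Module ℝ E] {M : E → ℝ}
    {γ L : ℝ} {s : E} (h : Tendsto (fun l : ℝ => l ^ (-γ) * M (l⁻¹ • s)) (𝓝[>] 0) (𝓝 L)) :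
    Tendsto (fun r : ℝ => r ^ γ * M (r • s)) atTop (𝓝 L) := by
  refine (h.comp tendsto_inv_atTop_nhdsGT_zero).congr' ?_
  filter_upwards [eventually_ge_atTop 0] with r hr
  rw [Function.comp, inv_inv, inv_rpow hr, rpow_neg hr, inv_inv]

theorem abs_rpow_mul_apply_smul_le {E : Type*} [NormedAddCommGroup E] [NormedSpace ℝ E] {M : E → ℝ}
    {γ C r : ℝ} {s : E} (hγ : 0 ≤ γ) (hM : ∀ v, |M v| ≤ C * √(1 + ‖v‖ ^ 2) ^ (-γ)) (hr : 0 ≤ r)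
    (hs : ‖s‖ = 1) : |r ^ γ * M (r • s)| ≤ C := by
  have hC : 0 ≤ C := by simpa using (abs_nonneg _).trans (hM 0)
  have norm_smul_eq : ‖r • s‖ = r := by rw [norm_smul, hs, mul_one, norm_of_nonneg hr]
  calc |r ^ γ * M (r • s)|
      = r ^ γ * |M (r • s)| := by rw [abs_mul, abs_of_nonneg (by positivity)]
    _ ≤ r ^ γ * (C * √(1 + r ^ 2) ^ (-γ)) := by
        gcongr
        simpa only [norm_smul_eq] using hM (r • s)
    _ = C * (r ^ γ * √(1 + r ^ 2) ^ (-γ)) := mul_left_comm _ _ _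
    _ ≤ C := mul_le_of_le_one_right hC (rpow_mul_sqrt_one_add_sq_rpow_neg_le_one hr hγ)

theorem abs_le_of_abs_le_mul_rpow_neg {E : Type*} [SeminormedAddGroup E] {M : E → ℝ} {γ C : ℝ}
    (hγ : 0 ≤ γ) (hM : ∀ v, |M v| ≤ C * √(1 + ‖v‖ ^ 2) ^ (-γ)) (v : E) : |M v| ≤ C := by
  have hC : 0 ≤ C := by simpa using (abs_nonneg _).trans (hM 0)
  refine (hM v).trans (mul_le_of_le_one_right hC (rpow_le_one_of_one_le_of_nonpos ?_ (by linarith)))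
  exact one_le_sqrt.2 (by linarith [sq_nonneg ‖v‖])

theorem stronglyMeasurable_sq_smul {E : Type*} [NormedAddCommGroup E] [NormedSpace ℝ E]
    [MeasurableSpace E] [BorelSpace E] [SecondCountableTopology E] {M : E → ℝ}
    (hM : Measurable M) : StronglyMeasurable fun v => M v ^ 2 • v :=
  (hM.pow_const 2).stronglyMeasurable.smul stronglyMeasurable_id

theorem locallyIntegrable_sq_smul {E : Type*} [NormedAddCommGroup E] [NormedSpace ℝ E]
    [MeasurableSpace E] [BorelSpace E] [SecondCountableTopology E] {μ : Measure E}
    [IsLocallyFiniteMeasure μ] {M : E → ℝ} {C : ℝ} (hM : Measurable M) (hMC : ∀ v, |M v| ≤ C) :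
    LocallyIntegrable (fun v => M v ^ 2 • v) μ := by
  have hdom : LocallyIntegrable (fun v : E => C ^ 2 • v) μ :=
    (continuous_const_smul (C ^ 2)).locallyIntegrable
  refine hdom.mono (stronglyMeasurable_sq_smul hM).aestronglyMeasurable (ae_of_all _ fun v => ?_)
  rw [norm_smul, norm_smul, norm_pow, norm_pow]
  gcongr
  exact (hMC v).trans (le_abs_self C)

theorem log_asymptotics_drift_general {E : Type*} [NormedAddCommGroup E] [NormedSpace ℝ E]
    [MeasurableSpace E] [BorelSpace E] [FiniteDimensional ℝ E] [Nontrivial E] (μ : Measure E)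
    [μ.IsAddHaarMeasure] {γ C : ℝ} (hγ : 2 * γ = finrank ℝ E + 1) {M m : E → ℝ}
    (hM : Measurable M) (hMC : ∀ v, |M v| ≤ C * √(1 + ‖v‖ ^ 2) ^ (-γ))
    (hm : ∀ s, ‖s‖ = 1 → Tendsto (fun l : ℝ => l ^ (-γ) * M (l⁻¹ • s)) (𝓝[>] 0) (𝓝 (m s))) :
    Tendsto (fun R : ℝ => (log R)⁻¹ • ∫ v in closedBall (0 : E) R, M v ^ 2 • v ∂μ) atTop
      (𝓝 (∫ s : sphere (0 : E) 1, m s ^ 2 • (s : E) ∂μ.toSphere)) ∧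
    Tendsto
      (fun ε : ℝ => (3 / |log ε|) • ∫ v in closedBall (0 : E) (ε ^ (-(1 : ℝ) / 3)), M v ^ 2 • v ∂μ)
      (𝓝[>] 0) (𝓝 (∫ s : sphere (0 : E) 1, m s ^ 2 • (s : E) ∂μ.toSphere)) := by
  have hγ₀ : 0 ≤ γ := by linarith [(finrank ℝ E).cast_nonneg (α := ℝ)]
  have hloc : LocallyIntegrable (fun v => M v ^ 2 • v) μ :=
    locallyIntegrable_sq_smul hM (abs_le_of_abs_le_mul_rpow_neg hγ₀ hMC)
  suffices hlim : Tendsto (fun R : ℝ => (log R)⁻¹ • ∫ v in closedBall (0 : E) R, M v ^ 2 • v ∂μ)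
      atTop (𝓝 (∫ s : sphere (0 : E) 1, m s ^ 2 • (s : E) ∂μ.toSphere)) from
    ⟨hlim, tendsto_div_abs_log_smul_comp_rpow three_pos hlim⟩
  refine tendsto_inv_log_smul_setIntegral_closedBall (C := C ^ 2) μ
    (stronglyMeasurable_sq_smul hM) hloc ?_ (ae_of_all _ fun s => ?_)
  · filter_upwards [eventually_ge_atTop 0] with r hr
    refine ae_of_all _ fun s => ?_
    have hs : ‖(s : E)‖ = 1 := norm_eq_of_mem_sphere s
    rw [pow_smul_sq_smul_smul hγ hr, norm_smul, hs, mul_one, norm_pow]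
    gcongr
    exact abs_rpow_mul_apply_smul_le hγ₀ hMC hr hs
  · have hs := tendsto_rpow_mul_apply_smul_atTop (hm s (norm_eq_of_mem_sphere s))
    refine ((hs.pow 2).smul_const (s : E)).congr' ?_
    filter_upwards [eventually_ge_atTop 0] with r hr using (pow_smul_sq_smul_smul hγ hr _ _).symm

end Drift

/-- **Logarithmic asymptotics of the truncated drift `j^ε`** (Lemma 4.4 of the paper),
in the critical case `2γ = d+1`: `(1/ln R) ∫_{|v|≤R} v M² dv → ∫_{S^{d-1}} s m²(s) dσ(s)`,
where `dσ` is the surface measure `volume.toSphere` on the unit sphere. -/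
theorem log_asymptotics_drift (d : ℕ) (hd : 2 ≤ d) (γ C₁ C₂ : ℝ)
    (hγ : 2 * γ = (d : ℝ) + 1) (hC₁ : 0 < C₁) (hC₁₂ : C₁ ≤ C₂)
    (M : EuclideanSpace ℝ (Fin d) → ℝ) (hMcont : Continuous M)
    (hA1 : ∀ v, C₁ * Real.sqrt (1 + ‖v‖ ^ 2) ^ (-γ) ≤ M v ∧
              M v ≤ C₂ * Real.sqrt (1 + ‖v‖ ^ 2) ^ (-γ))
    (m : EuclideanSpace ℝ (Fin d) → ℝ)
    (hA3 : ∀ s : EuclideanSpace ℝ (Fin d), s ≠ 0 →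
      Tendsto (fun l : ℝ => l ^ (-γ) * M (l⁻¹ • s)) (nhdsWithin 0 (Set.Ioi 0))
        (nhds (m s))) :
    Tendsto (fun R : ℝ => (Real.log R)⁻¹ •
        ∫ v in Metric.closedBall (0 : EuclideanSpace ℝ (Fin d)) R, (M v) ^ 2 • v)
      atTop
      (nhds (∫ s : Metric.sphere (0 : EuclideanSpace ℝ (Fin d)) 1,
        (m (s : EuclideanSpace ℝ (Fin d))) ^ 2 • (s : EuclideanSpace ℝ (Fin d))
          ∂((volume : Measure (EuclideanSpace ℝ (Fin d))).toSphere))) ∧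
    Tendsto (fun ε : ℝ => (3 / |Real.log ε|) •
        ∫ v in Metric.closedBall (0 : EuclideanSpace ℝ (Fin d)) (ε ^ (-(1 : ℝ) / 3)),
          (M v) ^ 2 • v)
      (nhdsWithin 0 (Set.Ioi 0))
      (nhds (∫ s : Metric.sphere (0 : EuclideanSpace ℝ (Fin d)) 1,
        (m (s : EuclideanSpace ℝ (Fin d))) ^ 2 • (s : EuclideanSpace ℝ (Fin d))
          ∂((volume : Measure (EuclideanSpace ℝ (Fin d))).toSphere))) := by
  have : Nonempty (Fin d) := ⟨⟨0, by omega⟩⟩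
  have hM_nonneg (v : EuclideanSpace ℝ (Fin d)) : 0 ≤ M v := le_trans (by positivity) (hA1 v).1
  exact log_asymptotics_drift_general volume (by simpa using hγ) hMcont.measurable
    (fun v => (abs_of_nonneg (hM_nonneg v)).trans_le (hA1 v).2)
    fun s hs => hA3 s (norm_ne_zero_iff.1 (hs ▸ one_ne_zero))
end
end
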